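/- arXiv:1603.08590 — 14 statements merged into one kernel-verified Lean document; each statement's English description precedes it below -/
import Mathlib

section
/- Every proto-unital shelf is associative: if (X,*) is a shelf satisfying a*b = b*(a*b) and a*b = (a*b)*b for all a,b ∈ X, then (a*b)*c = a*(b*c) for all a,b,c ∈ X. -/
/-- Every proto-unital shelf is associative. -/
theorem proto_unital_shelf_assoc {X : Type*} (op : X → X → X)
    (sd : ∀ a b c : X, op (op a b) c = op (op a c) (op b c))
    (h₁ : ∀ a b : X, op a b = op b (op a b))
    (h₂ : ∀ a b : X, op a b = op (op a b) b) :
    ∀ a b c : X, op (op a b) c = op a (op b c) := by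
  intro a b c
  rw [sd a b c, sd a c (op b c), ← h₁ b c, ← h₂ a (op b c)]
end

section
/- Let (X,*) be a unital shelf with unit 1. If a*b = 1 for some a,b ∈ X, then a = 1 and b = 1. (Consequently the set X \ {1} is closed under * and forms a pre-unital shelf.) -/
/-- In a unital shelf, if `a*b = 1` then `a = 1` and `b = 1`. -/
theorem unital_shelf_no_unit_product {X : Type*} (op : X → X → X)
    (sd : ∀ a b c : X, op (op a b) c = op (op a c) (op b c))
    (e : X) (he₁ : ∀ x : X, op e x = x) (he₂ : ∀ x : X, op x e = x) :
    ∀ a b : X, op a b = e → a = e ∧ b = e := by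
  intro a b h
  have h1 := sd e a b
  rw [he₁, he₁, h, he₂] at h1
  refine ⟨?_, h1.symm⟩
  rw [← h1, he₂] at h
  exact h
end

section
/- For every natural number n, the free associative shelf FAS(n) is a finite set. -/
/-- The self-distributivity relation on the free semigroup on `n` generators:
`(x*y)*z` is related to `(x*z)*(y*z)`. -/
def shelfRel (n : ℕ) : FreeSemigroup (Fin n) → FreeSemigroup (Fin n) → Prop :=
  fun a b => ∃ x y z : FreeSemigroup (Fin n), a = (x * y) * z ∧ b = (x * z) * (y * z)

/-- The free associative shelf on `n` generators: the quotient of the free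
semigroup on `n` generators by the smallest multiplicative congruence containing
the self-distributivity relation. -/
def FAS (n : ℕ) : Type := (conGen (shelfRel n)).Quotient

theorem FAS_decomp (n : ℕ) (l : List (Fin n)) (hl : 2 * n < l.length) :
    ∃ (P : List (Fin n)) (z b : Fin n) (M T : List (Fin n)),
      l = P ++ z :: (b :: M ++ z :: T) := by
  have key : ∃ i j : Fin (n + 1), i < j ∧
      l[2 * i.1]'(by omega) = l[2 * j.1]'(by omega) := by
    obtain ⟨i, j, hij, h⟩ := Fintype.exists_ne_map_eq_of_card_lt
      (fun i : Fin (n + 1) => l[2 * i.1]'(by omega)) (by simp)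
    rcases lt_or_gt_of_ne hij with h1 | h1
    · exact ⟨i, j, h1, h⟩
    · exact ⟨j, i, h1, h.symm⟩
  obtain ⟨i, j, hij, h⟩ := key
  have hij' : i.1 < j.1 := hij
  have hj := j.2
  have e1 : l = l.take (2 * i.1) ++ l[2 * i.1]'(by omega) :: l.drop (2 * i.1 + 1) := by
    rw [← List.drop_eq_getElem_cons, List.take_append_drop]
  generalize hm : l.drop (2 * i.1 + 1) = m at e1
  have hk : 2 * j.1 - 2 * i.1 - 1 < m.length := by
    rw [← hm, List.length_drop]; omega
  have e2 : m = m.take (2 * j.1 - 2 * i.1 - 1) ++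
      m[2 * j.1 - 2 * i.1 - 1] :: m.drop (2 * j.1 - 2 * i.1 - 1 + 1) := by
    rw [← List.drop_eq_getElem_cons, List.take_append_drop]
  have e3 : m[2 * j.1 - 2 * i.1 - 1] = l[2 * i.1]'(by omega) := by
    rw [h]
    subst hm
    rw [List.getElem_drop]
    congr 1
    omega
  rw [e3] at e2
  cases hq : m.take (2 * j.1 - 2 * i.1 - 1) with
  | nil =>
    have := congrArg List.length hq
    rw [List.length_take] at this
    simp only [List.length_nil] at this
    omega
  | cons b M =>
    rw [hq] at e2
    exact ⟨_, _, b, M, _, e1.trans (by rw [← e2])⟩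

theorem FAS_shorten (n : ℕ) (w : FreeSemigroup (Fin n)) (hw : 2 * n < w.tail.length) :
    ∃ w' : FreeSemigroup (Fin n), conGen (shelfRel n) w w' ∧
      w'.tail.length < w.tail.length := by
  obtain ⟨h, l⟩ := w
  obtain ⟨P, z, b, M, T, rfl⟩ := FAS_decomp n l hw
  have base : conGen (shelfRel n) (⟨h, P ++ b :: (M ++ [z])⟩)
      (⟨h, P ++ z :: (b :: M ++ [z])⟩) := by
    apply ConGen.Rel.of
    refine ⟨⟨h, P⟩, ⟨b, M⟩, ⟨z, []⟩, ?_, ?_⟩ <;>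
      apply FreeSemigroup.ext <;> simp
  refine ⟨⟨h, P ++ b :: (M ++ z :: T)⟩, (conGen (shelfRel n)).symm ?_, by simp⟩
  cases T with
  | nil => exact base
  | cons c T =>
    have := (conGen (shelfRel n)).mul base ((conGen (shelfRel n)).refl ⟨c, T⟩)
    convert this using 1 <;> apply FreeSemigroup.ext <;> simp

theorem FAS_normal (n : ℕ) : ∀ (k : ℕ) (w : FreeSemigroup (Fin n)), w.tail.length ≤ k →
    ∃ w' : FreeSemigroup (Fin n), conGen (shelfRel n) w w' ∧ w'.tail.length ≤ 2 * n := by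
  intro k
  induction k with
  | zero => intro w hw; exact ⟨w, (conGen (shelfRel n)).refl w, by omega⟩
  | succ k ih =>
    intro w hw
    by_cases h : w.tail.length ≤ 2 * n
    · exact ⟨w, (conGen (shelfRel n)).refl w, h⟩
    · obtain ⟨w1, h1, h2⟩ := FAS_shorten n w (by omega)
      obtain ⟨w2, h3, h4⟩ := ih w1 (by omega)
      exact ⟨w2, (conGen (shelfRel n)).trans h1 h3, h4⟩

/-- For every `n`, the free associative shelf `FAS(n)` is finite. -/
theorem FAS_finite (n : ℕ) : Finite (FAS n) := by
  have hfin : Finite {l : List (Fin n) // l.length ≤ 2 * n} :=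
    (List.finite_length_le (Fin n) (2 * n)).to_subtype
  let f : Fin n × {l : List (Fin n) // l.length ≤ 2 * n} → FAS n :=
    fun p => Con.toQuotient (c := conGen (shelfRel n)) ⟨p.1, p.2.1⟩
  apply Finite.of_surjective f
  intro q
  refine Con.induction_on (c := conGen (shelfRel n)) q ?_
  intro w
  obtain ⟨w', h, hl⟩ := FAS_normal n _ w le_rfl
  exact ⟨(w'.head, ⟨w'.tail, hl⟩), ((Con.eq _).2 h).symm⟩
end

section
/- Let c_n denote the cardinality of the free associative shelf FAS(n). Then c_0 = 0, c_1 = 3, and for all n ≥ 2 the two-term recursion c_n + (n-1)·c_{n-2} = (n+2)·c_{n-1} + 3n holds (equivalently, c_n = (n+2)c_{n-1} − (n-1)c_{n-2} + 3n). -/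
namespace FASProof

/-- Two last letters coincide. -/
def Dbl {α : Type} (l : List α) : Prop := ∃ a, [a, a] <:+ l

theorem dbl_append {α : Type} (p s : List α) (hs : 2 ≤ s.length) : Dbl (p ++ s) ↔ Dbl s := by
  constructor
  · rintro ⟨a, ha⟩
    exact ⟨a, List.suffix_of_suffix_length_le ha (List.suffix_append p s) (by simpa using hs)⟩
  · rintro ⟨a, ha⟩
    exact ⟨a, ha.trans (List.suffix_append p s)⟩

theorem dbl_nil {α : Type} : ¬ Dbl ([] : List α) := by
  rintro ⟨a, ha⟩
  simpa using ha.length_le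

theorem dbl_single {α : Type} (x : α) : ¬ Dbl [x] := by
  rintro ⟨a, ha⟩
  simpa using ha.length_le

theorem dbl_pair {α : Type} (x y : α) : Dbl [x, y] ↔ x = y := by
  constructor
  · rintro ⟨a, ha⟩
    have := ha.eq_of_length (by simp)
    simp at this
    rw [← this.1, ← this.2]
  · rintro rfl
    exact ⟨x, List.suffix_refl _⟩

theorem dbl_cons_of_notMem {α : Type} (a : α) (l : List α) (h : a ∉ l) :
    Dbl (a :: l) ↔ Dbl l := by
  match l, h with
  | [], _ => simp [dbl_nil, dbl_single]
  | [b], h =>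
    simp only [dbl_pair, dbl_single, iff_false]
    simpa using h
  | b :: c :: l, _ => exact dbl_append [a] (b :: c :: l) (by simp)

theorem not_dbl_of_nodup {α : Type} (l : List α) (h : l.Nodup) : ¬ Dbl l := by
  rintro ⟨a, ha⟩
  have := h.sublist ha.sublist
  simp at this

section
variable {n : ℕ}

/-- Invariant of a list. -/
def F (l : List (Fin n)) : Option (Fin n) × List (Fin n) × Prop :=
  (l.head?, l.tail.dedup, Dbl l.tail)

/-- The word as a list. -/
def toL (a : FreeSemigroup (Fin n)) : List (Fin n) := a.head :: a.tail

theorem toL_mul (a b : FreeSemigroup (Fin n)) : toL (a * b) = toL a ++ toL b := by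
  simp [toL]

theorem dedup_aux (A z y q : List (Fin n)) :
    (A ++ (z ++ (y ++ (z ++ q)))).dedup = (A ++ (y ++ (z ++ q))).dedup := by
  rw [List.dedup_append, List.dedup_append A]
  congr 1
  rw [List.dedup_append]
  have h : ∀ (z l : List (Fin n)), (∀ x ∈ z, x ∈ l) → z ∪ l = l := by
    intro z
    induction z with
    | nil => intro l _; simp
    | cons a z ih =>
      intro l h
      rw [List.cons_union, ih l (fun x hx => h x (by simp [hx]))]
      exact List.insert_of_mem (h a (by simp))
  apply h
  intro x hx
  simp [hx]

theorem F_cons_append (h : Fin n) (A y z q : List (Fin n)) (hy : y ≠ []) (hz : z ≠ []) :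
    F (h :: (A ++ (y ++ (z ++ q)))) = F (h :: (A ++ (z ++ (y ++ (z ++ q))))) := by
  have h1 := List.length_pos_iff.2 hy
  have h2 := List.length_pos_iff.2 hz
  have hl : 2 ≤ (y ++ (z ++ q)).length := by simp; omega
  simp only [F, List.head?_cons, List.tail_cons, dedup_aux]
  rw [dbl_append A _ hl, ← List.append_assoc A z, dbl_append _ _ hl]

theorem con_F {a b : FreeSemigroup (Fin n)} (h : conGen (shelfRel n) a b) :
    ∀ p q : List (Fin n), F (p ++ (toL a ++ q)) = F (p ++ (toL b ++ q)) := by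
  change ConGen.Rel (shelfRel n) a b at h
  induction h with
  | of a b h =>
    obtain ⟨x, y, z, rfl, rfl⟩ := h
    intro p q
    have hy : toL y ≠ [] := by simp [toL]
    have hz : toL z ≠ [] := by simp [toL]
    simp only [toL_mul, List.append_assoc]
    cases p with
    | nil =>
      have := F_cons_append x.head x.tail (toL y) (toL z) q hy hz
      simpa [toL] using this
    | cons c p =>
      have := F_cons_append c (p ++ toL x) (toL y) (toL z) q hy hz
      simpa using this
  | refl a => intro p q; rfl
  | symm _ ih => intro p q; exact (ih p q).symm
  | trans _ _ ih1 ih2 => intro p q; exact (ih1 p q).trans (ih2 p q)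
  | mul _ _ ih1 ih2 =>
    rename_i a b c d _ _
    intro p q
    have e1 := ih1 p (toL c ++ q)
    have e2 := ih2 (p ++ toL b) q
    simp only [toL_mul, List.append_assoc] at *
    exact e1.trans e2

/-- Tail equivalence. -/
def E (s t : List (Fin n)) : Prop :=
  ∀ h : Fin n, conGen (shelfRel n) (⟨h, s⟩ : FreeSemigroup (Fin n)) ⟨h, t⟩

theorem E.refl (s : List (Fin n)) : E s s := fun _ => Con.refl _ _
theorem E.symm {s t : List (Fin n)} (h : E s t) : E t s := fun x => Con.symm _ (h x)
theorem E.trans {s t u : List (Fin n)} (h : E s t) (h' : E t u) : E s u :=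
  fun x => Con.trans _ (h x) (h' x)
theorem E.cons {s t : List (Fin n)} (a : Fin n) (h : E s t) : E (a :: s) (a :: t) := by
  intro x
  exact Con.mul _ (Con.refl _ (⟨x, []⟩ : FreeSemigroup (Fin n))) (h a)
theorem E.append {s t : List (Fin n)} (q : List (Fin n)) (h : E s t) : E (s ++ q) (t ++ q) := by
  cases q with
  | nil => simpa using h
  | cons b q =>
    intro x
    exact Con.mul _ (h x) (Con.refl _ (⟨b, q⟩ : FreeSemigroup (Fin n)))
theorem E_rule (y z : Fin n) (Y Z Q : List (Fin n)) :
    E ((y :: Y) ++ (z :: Z) ++ Q) ((z :: Z) ++ (y :: Y) ++ (z :: Z) ++ Q) := by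
  apply E.append
  intro x
  apply ConGen.Rel.of
  refine ⟨⟨x, []⟩, ⟨y, Y⟩, ⟨z, Z⟩, ?_, ?_⟩ <;> ext1 <;> simp

theorem E_rule2 (y w : Fin n) (Q : List (Fin n)) :
    E (y :: y :: w :: Q) (y :: w :: Q) := by
  have h1 : E (y :: w :: Q) (w :: y :: w :: Q) := E_rule y w [] [] Q
  have h2 : E (w :: y :: w :: Q) (y :: w :: y :: w :: Q) := E_rule w y [] [] (w :: Q)
  have h3 : E (y :: y :: w :: Q) (y :: w :: y :: w :: Q) := h1.cons y
  exact h3.trans (h2.symm.trans h1.symm)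

theorem E_drop (a : Fin n) (l : List (Fin n)) (ha : a ∈ l) (hl : 2 ≤ l.length) :
    E (a :: l) l := by
  obtain ⟨u, v, rfl⟩ := List.append_of_mem ha
  cases u with
  | nil =>
    cases v with
    | nil => simp at hl
    | cons w Q => exact E_rule2 a w Q
  | cons y Y =>
    have := (E_rule y a Y [] v).symm
    simpa using this

open Classical in
/-- Normal form. -/
noncomputable def nf (d : List (Fin n)) (b : Prop) : List (Fin n) :=
  if b then d ++ d.getLast?.toList else d

theorem nf_cons (a : Fin n) (d : List (Fin n)) (b : Prop) (hd : d ≠ [] ∨ ¬ b) :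
    nf (a :: d) b = a :: nf d b := by
  unfold nf
  split_ifs with hb
  · have : d ≠ [] := by tauto
    cases d with
    | nil => simp at this
    | cons x d => simp [List.getLast?_cons_cons]
  · rfl

theorem E_nf (t : List (Fin n)) : E t (nf t.dedup (Dbl t)) := by
  induction t with
  | nil => simp [nf, dbl_nil, E.refl]
  | cons a l ih =>
    by_cases ha : a ∈ l
    · rw [List.dedup_cons_of_mem ha]
      by_cases hl : 2 ≤ l.length
      · have : Dbl (a :: l) = Dbl l := propext (dbl_append [a] l hl)
        rw [this]
        exact (E_drop a l ha hl).trans ih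
      · match l, ha, hl with
        | [b], ha, _ =>
          have : a = b := by simpa using ha
          subst this
          simp [nf, dbl_pair, E.refl]
        | b :: c :: l, _, hl => simp at hl
    · rw [List.dedup_cons_of_notMem ha, propext (dbl_cons_of_notMem a l ha), nf_cons]
      · exact ih.cons a
      · by_cases h : l = []
        · subst h; exact Or.inr dbl_nil
        · left
          obtain ⟨x, hx⟩ := List.exists_mem_of_ne_nil l h
          exact List.ne_nil_of_mem (List.mem_dedup.2 hx)

theorem nf_spec (d : List (Fin n)) (b : Prop) (hd : d.Nodup) (h : ¬ (d = [] ∧ b)) :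
    (nf d b).dedup = d ∧ (Dbl (nf d b) ↔ b) := by
  induction d with
  | nil =>
    have hb : ¬ b := by tauto
    simp [nf, hb, dbl_nil]
  | cons a d ih =>
    by_cases hb : b
    · rcases List.eq_nil_or_concat (a :: d) with h0 | ⟨L, c, h0⟩
      · simp at h0
      · rw [List.concat_eq_append] at h0
        rw [h0] at hd ⊢
        have e : nf (L ++ [c]) b = L ++ [c, c] := by simp [nf, hb]
        rw [e]
        constructor
        · rw [List.dedup_append]
          have : ([c, c] : List (Fin n)).dedup = [c].dedup := by simp
          rw [this, ← List.dedup_append, List.Nodup.dedup hd]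
        · simp only [hb, iff_true]
          exact ⟨c, List.suffix_append _ _⟩
    · have e : nf (a :: d) b = a :: d := by simp [nf, hb]
      rw [e]
      exact ⟨List.Nodup.dedup hd, by simp [hb, not_dbl_of_nodup _ hd]⟩

end

/-- Nodup lists. -/
abbrev ND (n : ℕ) : Type := {l : List (Fin n) // l.Nodup}

/-- Normal-form data. -/
abbrev T (n : ℕ) : Type := Fin n × ND n × Prop

/-- Excluded data. -/
def Bad {n : ℕ} (p : T n) : Prop := p.2.1.1 = [] ∧ p.2.2

/-- Invariant of a word. -/
def inv {n : ℕ} (a : FreeSemigroup (Fin n)) : {p : T n // ¬ Bad p} :=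
  ⟨(a.head, ⟨a.tail.dedup, List.nodup_dedup _⟩, Dbl a.tail), by
    rintro ⟨h1, h2⟩
    have h1' : a.tail = [] := by
      rw [List.eq_nil_iff_forall_not_mem]
      intro x hx
      have : x ∈ a.tail.dedup := List.mem_dedup.2 hx
      simp only at h1
      rw [h1] at this
      simp at this
    simp only [h1'] at h2
    exact dbl_nil h2⟩

theorem inv_con {n : ℕ} (a b : FreeSemigroup (Fin n)) (h : conGen (shelfRel n) a b) :
    inv a = inv b := by
  have := con_F h [] []
  simp only [F, toL, List.nil_append, List.append_nil, List.head?_cons, List.tail_cons,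
    Prod.mk.injEq, Option.some.injEq] at this
  apply Subtype.ext
  simp only [inv, Prod.mk.injEq, Subtype.mk.injEq]
  exact this

theorem con_inv {n : ℕ} (a b : FreeSemigroup (Fin n)) (h : inv a = inv b) :
    conGen (shelfRel n) a b := by
  have h' := congrArg Subtype.val h
  simp only [inv, Prod.mk.injEq, Subtype.mk.injEq] at h'
  obtain ⟨h1, h2, h3⟩ := h'
  obtain ⟨x, s⟩ := a
  obtain ⟨y, t⟩ := b
  simp only at h1 h2 h3
  subst h1
  have e1 := E_nf s
  rw [h2, h3] at e1
  exact (e1.trans (E_nf t).symm) x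

/-- The classification of elements of the free associative shelf. -/
def toT (n : ℕ) : FAS n → {p : T n // ¬ Bad p} :=
  Quotient.lift inv (fun a b h => inv_con a b h)

theorem toT_bij (n : ℕ) : Function.Bijective (toT n) := by
  constructor
  · intro a b
    refine Quotient.inductionOn₂ a b ?_
    intro a b h
    exact Quotient.sound (con_inv a b h)
  · rintro ⟨⟨x, ⟨d, hd⟩, b⟩, hb⟩
    obtain ⟨h1, h2⟩ := nf_spec d b hd hb
    refine ⟨Quotient.mk _ (⟨x, nf d b⟩ : FreeSemigroup (Fin n)), ?_⟩
    apply Subtype.ext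
    change (inv _).1 = _
    simp only [inv, Prod.mk.injEq, Subtype.mk.injEq, true_and]
    exact ⟨h1, propext h2⟩

/-- Number of repetition-free words. -/
def B (n : ℕ) : ℕ := ∑ k ∈ Finset.range (n + 1), n.descFactorial k

theorem B_succ (n : ℕ) : B (n + 1) = 1 + (n + 1) * B n := by
  unfold B
  rw [Finset.sum_range_succ', Finset.mul_sum, add_comm]
  simp only [Nat.succ_descFactorial_succ, Nat.descFactorial_zero]

/-- Nodup lists as injections. -/
def ndEquiv (n : ℕ) : ND n ≃ Σ k : Fin (n + 1), (Fin k ↪ Fin n) where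
  toFun l := ⟨⟨l.1.length, by
      have := l.2.length_le_card
      simp at this
      omega⟩, ⟨l.1.get, List.nodup_iff_injective_get.1 l.2⟩⟩
  invFun f := ⟨List.ofFn f.2, List.nodup_ofFn.2 f.2.injective⟩
  left_inv l := by
    apply Subtype.ext
    exact List.ofFn_get l.1
  right_inv f := by
    obtain ⟨⟨k, hk⟩, f⟩ := f
    refine Sigma.ext (by simp) ?_
    have key : ∀ (m : ℕ) (h : m = k) (g : Fin m ↪ Fin n),
        (∀ i : Fin m, g i = f (Fin.cast h i)) → HEq g f := by
      intro m h g hg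
      subst h
      apply heq_of_eq
      ext i
      rw [hg i]
      rfl
    apply key _ (by simp)
    intro i
    simp
    rfl

theorem card_ND (n : ℕ) : Nat.card (ND n) = B n := by
  rw [Nat.card_congr (ndEquiv n), Nat.card_eq_fintype_card, Fintype.card_sigma]
  simp only [Fintype.card_embedding_eq, Fintype.card_fin]
  exact Fin.sum_univ_eq_sum_range (fun k => n.descFactorial k) (n + 1)

theorem card_bad (n : ℕ) : Nat.card {p : T n // Bad p} = n := by
  have e : Fin n ≃ {p : T n // Bad p} :=
    { toFun := fun x => ⟨(x, ⟨[], List.nodup_nil⟩, True), rfl, trivial⟩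
      invFun := fun p => p.1.1
      left_inv := fun x => rfl
      right_inv := by
        rintro ⟨⟨x, ⟨d, hd⟩, b⟩, h1, h2⟩
        simp only at h1 h2
        subst h1
        simp [h2] }
  rw [← Nat.card_congr e, Nat.card_eq_fintype_card, Fintype.card_fin]

theorem card_FAS (n : ℕ) : Nat.card (FAS n) + n = 2 * n * B n := by
  classical
  have hfin : Finite (ND n) := Finite.of_equiv _ (ndEquiv n).symm
  have h : Nat.card {p : T n // Bad p} + Nat.card {p : T n // ¬ Bad p} = Nat.card (T n) := by
    rw [← Nat.card_sum]
    exact Nat.card_congr (Equiv.sumCompl Bad)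
  rw [card_bad, ← Nat.card_eq_of_bijective _ (toT_bij n), Nat.card_prod, Nat.card_prod, card_ND,
    Nat.card_fin, Nat.card_eq_fintype_card (α := Prop), Fintype.card_prop] at h
  rw [add_comm, h]
  ring

end FASProof

/-- With `c n = Nat.card (FAS n)`, we have `c 0 = 0`, `c 1 = 3`, and
for `n ≥ 2` the two-term recursion `c n + (n-1)·c (n-2) = (n+2)·c (n-1) + 3n`. -/
theorem FAS_card_recursion :
    Nat.card (FAS 0) = 0 ∧ Nat.card (FAS 1) = 3 ∧
      ∀ n : ℕ, 2 ≤ n →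
        Nat.card (FAS n) + (n - 1) * Nat.card (FAS (n - 2))
          = (n + 2) * Nat.card (FAS (n - 1)) + 3 * n := by
  refine ⟨?_, ?_, ?_⟩
  · have := FASProof.card_FAS 0
    simpa using this
  · have h := FASProof.card_FAS 1
    have h1 := FASProof.B_succ 0
    have h0 : FASProof.B 0 = 1 := by simp [FASProof.B]
    rw [h0] at h1
    simp only [zero_add] at h1
    rw [h1] at h
    omega
  · intro n hn
    obtain ⟨k, rfl⟩ := Nat.exists_eq_add_of_le' hn
    have e1 : k + 2 - 1 = k + 1 := rfl
    have e2 : k + 2 - 2 = k := rfl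
    rw [e1, e2]
    have h0 := FASProof.card_FAS k
    have h1 := FASProof.card_FAS (k + 1)
    have h2 := FASProof.card_FAS (k + 2)
    have b1 := FASProof.B_succ k
    have b2 := FASProof.B_succ (k + 1)
    have e3 : k + 1 + 1 = k + 2 := rfl
    rw [e3] at b2
    zify at *
    linear_combination h2 + ((k : ℤ) + 1) * h0 - ((k : ℤ) + 4) * h1
      + 2 * ((k : ℤ) + 2) * b2 - 2 * (k : ℤ) * b1
end

section
/- Let c_n denote the cardinality of the free associative shelf FAS(n). Then in the ring of formal power series ℚ[[x]], the exponential generating function of (c_n) satisfies (1 − x)^2 · Σ_{n≥0} (c_n/n!) x^n = (3x − x^3) · exp(x). -/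
/-- The normal form of (the tail of) a word: drop each letter that occurs later on, except that a
doubled letter at the very end is kept. -/
def nfl {α : Type} [DecidableEq α] : List α → List α
  | [] => []
  | c :: t => if c ∈ t ∧ t ≠ [c] then nfl t else c :: nfl t

section nfl
variable {α : Type} [DecidableEq α]

theorem mem_nfl (a : α) (l : List α) : a ∈ nfl l ↔ a ∈ l := by
  induction l with
  | nil => simp [nfl]
  | cons c t ih =>
    unfold nfl
    split_ifs with h
    · rw [ih, List.mem_cons]
      constructor
      · exact Or.inr
      · rintro (rfl | h')
        · exact h.1
        · exact h'
    · simp [ih]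

theorem nfl_eq_nil (l : List α) : nfl l = [] ↔ l = [] := by
  constructor
  · intro h
    rw [List.eq_nil_iff_forall_not_mem] at h ⊢
    intro a ha
    exact h a ((mem_nfl a l).2 ha)
  · rintro rfl; rfl

theorem nfl_eq_singleton (c : α) (l : List α) : nfl l = [c] ↔ l = [c] := by
  constructor
  · induction l with
    | nil => simp [nfl]
    | cons d t ih =>
      unfold nfl
      split_ifs with h
      · intro h'
        have := ih h'
        subst this
        have h1 := h.1
        simp at h1
        exact absurd (by rw [h1]) h.2
      · intro h'
        simp only [List.cons.injEq, nfl_eq_nil] at h'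
        simp [h'.1, h'.2]
  · rintro rfl; simp [nfl]

theorem nfl_cons_congr {a b : List α} (h : nfl a = nfl b) (c : α) :
    nfl (c :: a) = nfl (c :: b) := by
  have h1 : c ∈ a ↔ c ∈ b := by rw [← mem_nfl c a, h, mem_nfl]
  have h2 : a = [c] ↔ b = [c] := by rw [← nfl_eq_singleton c a, h, nfl_eq_singleton]
  unfold nfl
  simp only [h1, ne_eq, h2, h]

theorem nfl_append_left {a b : List α} (h : nfl a = nfl b) (s : List α) :
    nfl (s ++ a) = nfl (s ++ b) := by
  induction s with
  | nil => simpa using h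
  | cons c s ih => exact nfl_cons_congr ih c

theorem nfl_nfl_append (a q : List α) : nfl (nfl a ++ q) = nfl (a ++ q) := by
  induction a with
  | nil => simp [nfl]
  | cons c t ih =>
    by_cases h : c ∈ t ∧ t ≠ [c]
    · have h1 : nfl (c :: t) = nfl t := by rw [nfl, if_pos h]
      rw [h1, ih, List.cons_append, nfl, if_pos]
      refine ⟨List.mem_append_left _ h.1, ?_⟩
      intro h2
      rcases List.append_eq_singleton_iff.1 h2 with h3 | h3
      · have := h.1
        simp [h3.1] at this
      · exact h.2 h3.1
    · have h1 : nfl (c :: t) = c :: nfl t := by rw [nfl, if_neg h]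
      rw [h1]
      exact nfl_cons_congr ih c

theorem nfl_append_right {a b : List α} (h : nfl a = nfl b) (q : List α) :
    nfl (a ++ q) = nfl (b ++ q) := by
  rw [← nfl_nfl_append a, h, nfl_nfl_append]

theorem nfl_idem (a : List α) : nfl (nfl a) = nfl a := by
  simpa using nfl_nfl_append a []

theorem nfl_absorb (z t : List α) (hz : ∀ a ∈ z, a ∈ t) (ht : 2 ≤ t.length) :
    nfl (z ++ t) = nfl t := by
  induction z with
  | nil => rfl
  | cons c z ih =>
    rw [List.cons_append, nfl, if_pos]
    · exact ih fun a ha => hz a (List.mem_cons_of_mem _ ha)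
    · refine ⟨List.mem_append_right _ (hz c List.mem_cons_self), ?_⟩
      intro h
      have := congrArg List.length h
      simp at this
      omega

theorem nfl_of_nodup {l : List α} (h : l.Nodup) : nfl l = l := by
  induction l with
  | nil => rfl
  | cons c t ih =>
    rw [List.nodup_cons] at h
    rw [nfl, if_neg (fun h' => h.1 h'.1), ih h.2]

theorem nfl_of_doubled {s : List α} {c : α} (h : (s ++ [c]).Nodup) :
    nfl (s ++ [c, c]) = s ++ [c, c] := by
  induction s with
  | nil => simp [nfl]
  | cons d s ih =>
    rw [List.cons_append, List.nodup_cons] at h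
    rw [List.cons_append, nfl, if_neg, ih h.2]
    intro h'
    apply h.1
    have := h'.1
    simpa using this

theorem nfl_cases (l : List α) :
    (nfl l).Nodup ∨ ∃ s c, nfl l = s ++ [c, c] ∧ (s ++ [c]).Nodup := by
  induction l with
  | nil => simp [nfl]
  | cons c t ih =>
    by_cases h : c ∈ t ∧ t ≠ [c]
    · rw [nfl, if_pos h]; exact ih
    · rw [nfl, if_neg h]
      by_cases hc : c ∈ t
      · have : t = [c] := by
          by_contra h'
          exact h ⟨hc, h'⟩
        subst this
        right
        exact ⟨[], c, by simp [nfl], by simp⟩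
      · have hc' : c ∉ nfl t := by rwa [mem_nfl]
        rcases ih with ih | ⟨s, d, h1, h2⟩
        · left; exact List.nodup_cons.2 ⟨hc', ih⟩
        · right
          refine ⟨c :: s, d, by simp [h1], ?_⟩
          rw [List.cons_append, List.nodup_cons]
          refine ⟨?_, h2⟩
          rw [h1] at hc'
          simpa using hc'

end nfl

/-- The congruence on words given by equality of first letters and of normal forms of tails. -/
def nfCon (n : ℕ) : Con (FreeSemigroup (Fin n)) where
  r a b := a.head = b.head ∧ nfl a.tail = nfl b.tail
  iseqv := ⟨fun _ => ⟨rfl, rfl⟩, fun h => ⟨h.1.symm, h.2.symm⟩,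
    fun h h' => ⟨h.1.trans h'.1, h.2.trans h'.2⟩⟩
  mul' := by
    rintro ⟨a, s⟩ ⟨b, t⟩ ⟨c, u⟩ ⟨d, v⟩ ⟨h1, h2⟩ ⟨h3, h4⟩
    simp only at h1 h2 h3 h4
    subst h1 h3
    refine ⟨rfl, ?_⟩
    change nfl (s ++ _ :: u) = nfl (t ++ _ :: v)
    rw [nfl_append_right h2]
    exact nfl_append_left (nfl_cons_congr h4 _) _

theorem conGen_le_nfCon (n : ℕ) : conGen (shelfRel n) ≤ nfCon n := by
  apply Con.conGen_le.2
  rintro a b ⟨⟨x, s⟩, ⟨y, t⟩, ⟨z, u⟩, rfl, rfl⟩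
  refine ⟨rfl, ?_⟩
  change nfl ((s ++ y :: t) ++ z :: u) = nfl ((s ++ z :: u) ++ y :: (t ++ z :: u))
  rw [List.append_assoc, List.append_assoc]
  apply nfl_append_left
  symm
  apply nfl_absorb
  · intro a ha
    simp at ha ⊢
    tauto
  · simp
    omega

section complete
variable {n : ℕ}

theorem shelf_step (x y z : FreeSemigroup (Fin n)) :
    conGen (shelfRel n) (x * y * z) (x * z * (y * z)) :=
  ConGen.Rel.of _ _ ⟨x, y, z, rfl, rfl⟩

theorem shelf_sq (x c v : FreeSemigroup (Fin n)) :
    conGen (shelfRel n) (x * c * c * v) (x * c * v) := by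
  -- x c c v = x c v c v = x v c v = x c v
  have h1 := shelf_step (x * c) c v
  have h2 := shelf_step x v c
  have h3 := shelf_step x c v
  have h4 : conGen (shelfRel n) (x * v * c * v) (x * c * (v * c) * v) :=
    (conGen (shelfRel n)).mul h2 ((conGen (shelfRel n)).refl v)
  have e1 : x * c * (v * c) * v = x * c * v * (c * v) := by simp only [mul_assoc]
  have e2 : x * v * c * v = x * v * (c * v) := by simp only [mul_assoc]
  rw [e1, e2] at h4
  exact (conGen (shelfRel n)).trans h1 ((conGen (shelfRel n)).trans
    ((conGen (shelfRel n)).symm h4) ((conGen (shelfRel n)).symm h3))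

theorem shelf_drop (f c : Fin n) (s t : List (Fin n)) (hc : c ∈ t) (ht : t ≠ [c]) :
    conGen (shelfRel n) ⟨f, s ++ c :: t⟩ ⟨f, s ++ t⟩ := by
  obtain ⟨t1, t2, rfl⟩ := List.append_of_mem hc
  cases t1 with
  | nil =>
    cases t2 with
    | nil => exact absurd rfl ht
    | cons d t2 =>
      have := shelf_sq (⟨f, s⟩ : FreeSemigroup (Fin n)) ⟨c, []⟩ ⟨d, t2⟩
      have e1 : (⟨f, s⟩ * ⟨c, []⟩ * ⟨c, []⟩ * ⟨d, t2⟩ : FreeSemigroup (Fin n))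
          = ⟨f, s ++ c :: ([] ++ c :: d :: t2)⟩ := by
        change FreeSemigroup.mk f (((s ++ [c]) ++ [c]) ++ d :: t2) = _
        simp
      have e2 : (⟨f, s⟩ * ⟨c, []⟩ * ⟨d, t2⟩ : FreeSemigroup (Fin n))
          = ⟨f, s ++ ([] ++ c :: d :: t2)⟩ := by
        change FreeSemigroup.mk f ((s ++ [c]) ++ d :: t2) = _
        simp
      rwa [e1, e2] at this
  | cons d t1 =>
    have h := (conGen (shelfRel n)).symm
      (shelf_step (⟨f, s⟩ : FreeSemigroup (Fin n)) ⟨d, t1⟩ ⟨c, []⟩)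
    cases t2 with
    | nil =>
      have e1 : (⟨f, s⟩ * ⟨c, []⟩ * (⟨d, t1⟩ * ⟨c, []⟩) : FreeSemigroup (Fin n))
          = ⟨f, s ++ c :: (d :: t1 ++ [c])⟩ := by
        change FreeSemigroup.mk f ((s ++ [c]) ++ d :: (t1 ++ [c])) = _
        simp
      have e2 : (⟨f, s⟩ * ⟨d, t1⟩ * ⟨c, []⟩ : FreeSemigroup (Fin n))
          = ⟨f, s ++ (d :: t1 ++ [c])⟩ := by
        change FreeSemigroup.mk f ((s ++ d :: t1) ++ [c]) = _
        simp
      rwa [e1, e2] at h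
    | cons e t2 =>
      have h := (conGen (shelfRel n)).mul h ((conGen (shelfRel n)).refl ⟨e, t2⟩)
      have e1 : (⟨f, s⟩ * ⟨c, []⟩ * (⟨d, t1⟩ * ⟨c, []⟩) * ⟨e, t2⟩ : FreeSemigroup (Fin n))
          = ⟨f, s ++ c :: (d :: t1 ++ c :: e :: t2)⟩ := by
        change FreeSemigroup.mk f (((s ++ [c]) ++ d :: (t1 ++ [c])) ++ e :: t2) = _
        simp
      have e2 : (⟨f, s⟩ * ⟨d, t1⟩ * ⟨c, []⟩ * ⟨e, t2⟩ : FreeSemigroup (Fin n))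
          = ⟨f, s ++ (d :: t1 ++ c :: e :: t2)⟩ := by
        change FreeSemigroup.mk f (((s ++ d :: t1) ++ [c]) ++ e :: t2) = _
        simp
      rwa [e1, e2] at h

theorem shelf_nfl (f : Fin n) (t : List (Fin n)) : ∀ s : List (Fin n),
    conGen (shelfRel n) ⟨f, s ++ t⟩ ⟨f, s ++ nfl t⟩ := by
  induction t with
  | nil => intro s; exact (conGen (shelfRel n)).refl _
  | cons c t ih =>
    intro s
    by_cases h : c ∈ t ∧ t ≠ [c]
    · rw [nfl, if_pos h]
      exact (conGen (shelfRel n)).trans (shelf_drop f c s t h.1 h.2) (ih s)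
    · rw [nfl, if_neg h]
      have := ih (s ++ [c])
      simpa using this

theorem conGen_iff (a b : FreeSemigroup (Fin n)) :
    conGen (shelfRel n) a b ↔ a.head = b.head ∧ nfl a.tail = nfl b.tail := by
  constructor
  · intro h
    exact conGen_le_nfCon n h
  · rcases a with ⟨f, s⟩
    rcases b with ⟨g, t⟩
    rintro ⟨h1, h2⟩
    simp only at h1 h2
    subst h1
    have h3 := shelf_nfl f s []
    have h4 := shelf_nfl f t []
    simp only [List.nil_append] at h3 h4
    rw [h2] at h3
    exact (conGen (shelfRel n)).trans h3 ((conGen (shelfRel n)).symm h4)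

end complete

theorem card_FAS_eq (n : ℕ) :
    Nat.card (FAS n) = n * Nat.card {l : List (Fin n) // nfl l = l} := by
  have e : FAS n ≃ Fin n × {l : List (Fin n) // nfl l = l} := by
    refine Equiv.ofBijective (Quotient.lift
      (fun a : FreeSemigroup (Fin n) => ((a.head, ⟨nfl a.tail, nfl_idem _⟩) :
        Fin n × {l : List (Fin n) // nfl l = l})) ?_) ⟨?_, ?_⟩
    · intro a b h
      have := (conGen_iff a b).1 h
      simp [this.1, this.2]
    · intro a b
      induction a using Quotient.inductionOn
      induction b using Quotient.inductionOn
      rename_i a b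
      intro h
      simp only [Quotient.lift_mk, Prod.mk.injEq, Subtype.mk.injEq] at h
      exact Quotient.sound ((conGen_iff a b).2 h)
    · rintro ⟨f, ⟨l, hl⟩⟩
      exact ⟨Quotient.mk _ ⟨f, l⟩, by simp [hl]⟩
  rw [Nat.card_congr e, Nat.card_prod]
  simp

theorem card_nodup (n : ℕ) : Nat.card {l : List (Fin n) // l.Nodup}
    = ∑ k ∈ Finset.range (n + 1), n.descFactorial k := by
  have e : (Σ k : Fin (n + 1), (Fin k ↪ Fin n)) ≃ {l : List (Fin n) // l.Nodup} := by
    refine Equiv.ofBijective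
      (fun p => ⟨List.ofFn p.2, List.nodup_ofFn.2 p.2.injective⟩) ⟨?_, ?_⟩
    · rintro ⟨⟨k, hk⟩, f⟩ ⟨⟨m, hm⟩, g⟩ h
      simp only [Subtype.mk.injEq] at h
      have hl := congrArg List.length h
      simp only [List.length_ofFn] at hl
      subst hl
      have := List.ofFn_injective h
      have : f = g := DFunLike.coe_injective this
      rw [this]
    · rintro ⟨l, hl⟩
      have hlen : l.length < n + 1 := by
        have := hl.length_le_card
        simp at this
        omega
      refine ⟨⟨⟨l.length, hlen⟩, ⟨l.get, List.nodup_iff_injective_get.1 hl⟩⟩, ?_⟩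
      simp
  rw [← Nat.card_congr e, Nat.card_eq_fintype_card, Fintype.card_sigma,
    Finset.sum_range]
  simp

theorem card_nfl (n : ℕ) : Nat.card {l : List (Fin n) // nfl l = l} + 1
    = 2 * Nat.card {l : List (Fin n) // l.Nodup} := by
  have e : Option {l : List (Fin n) // nfl l = l} ≃
      {l : List (Fin n) // l.Nodup} ⊕ {l : List (Fin n) // l.Nodup} := by
    symm
    refine Equiv.ofBijective (Sum.elim
      (fun l => some ⟨l.1, nfl_of_nodup l.2⟩)
      (fun l => if h : l.1 = [] then none else
        some ⟨l.1.dropLast ++ [l.1.getLast h, l.1.getLast h], nfl_of_doubled (by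
          rw [List.dropLast_append_getLast]; exact l.2)⟩)) ⟨?_, ?_⟩
    · have aux : ∀ (l m : List (Fin n)) (hl : l.Nodup) (h : m ≠ []),
          l ≠ m.dropLast ++ [m.getLast h, m.getLast h] := by
        rintro l m hl h rfl
        simp [List.nodup_append] at hl
      rintro (⟨l, hl⟩ | ⟨l, hl⟩) (⟨m, hm⟩ | ⟨m, hm⟩) h
      · simp at h
        simp [h]
      · simp only [Sum.elim_inl, Sum.elim_inr] at h
        split_ifs at h with h1
        simp only [Option.some.injEq, Subtype.mk.injEq] at h
        exact absurd h (aux l m hl h1)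
      · simp only [Sum.elim_inl, Sum.elim_inr] at h
        split_ifs at h with h1
        simp only [Option.some.injEq, Subtype.mk.injEq] at h
        exact absurd h.symm (aux m l hm h1)
      · simp only [Sum.elim_inr] at h
        split_ifs at h with h1 h2 h2
        · simp [h1, h2]
        · simp only [Option.some.injEq, Subtype.mk.injEq] at h
          have h' := congrArg List.dropLast h
          have k : ∀ (s : List (Fin n)) (c : Fin n), (s ++ [c, c]).dropLast = s ++ [c] := by
            intro s c
            simp
          rw [k, k, List.dropLast_append_getLast, List.dropLast_append_getLast] at h'
          simp [h']
    · rintro (_ | ⟨l, hl⟩)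
      · exact ⟨Sum.inr ⟨[], by simp⟩, by simp⟩
      · rcases nfl_cases l with h | ⟨s, c, h1, h2⟩
        · rw [hl] at h
          exact ⟨Sum.inl ⟨l, h⟩, rfl⟩
        · rw [hl] at h1
          subst h1
          exact ⟨Sum.inr ⟨s ++ [c], h2⟩, by simp⟩
  have : Finite {l : List (Fin n) // l.Nodup} := inferInstance
  have : Finite (Option {l : List (Fin n) // nfl l = l}) := Finite.of_equiv _ e.symm
  have : Finite {l : List (Fin n) // nfl l = l} :=
    Finite.of_injective _ (Option.some_injective _)
  rw [← Finite.card_option, Nat.card_congr e, Nat.card_sum, two_mul]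

/-- The partial sums `∑_{k ≤ n} 1/k!`. -/
def psum (n : ℕ) : ℚ := ∑ k ∈ Finset.range (n + 1), 1 / (k.factorial : ℚ)

theorem card_nodup_div (n : ℕ) :
    (Nat.card {l : List (Fin n) // l.Nodup} : ℚ) = n.factorial * psum n := by
  rw [card_nodup, psum, Finset.mul_sum, ← Finset.sum_range_reflect]
  push_cast
  apply Finset.sum_congr rfl
  intro k hk
  rw [Finset.mem_range] at hk
  have h2 := Nat.factorial_mul_descFactorial (Nat.sub_le n k)
  rw [Nat.sub_sub_self (by omega)] at h2
  rw [← h2]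
  have : (k.factorial : ℚ) ≠ 0 := by positivity
  push_cast
  field_simp

theorem card_div (n : ℕ) : (Nat.card (FAS n) : ℚ) / n.factorial
    = n * (2 * psum n - 1 / n.factorial) := by
  have h := card_nfl n
  have h' : (Nat.card {l : List (Fin n) // nfl l = l} : ℚ)
      = 2 * (n.factorial * psum n) - 1 := by
    rw [← card_nodup_div, eq_sub_iff_add_eq]
    exact_mod_cast h
  rw [card_FAS_eq]
  push_cast
  rw [h']
  have : (n.factorial : ℚ) ≠ 0 := by positivity
  field_simp

theorem psum_succ (n : ℕ) : psum (n + 1) = psum n + 1 / ((n + 1).factorial : ℚ) := by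
  rw [psum, Finset.sum_range_succ]; rfl

open PowerSeries in
/-- With `c n = Nat.card (FAS n)`, in `ℚ[[x]]` we have
`(1 - x)² · Σ (c n / n!) xⁿ = (3x - x³) · exp x`. -/
theorem FAS_card_egf :
    (1 - (X : ℚ⟦X⟧)) ^ 2
        * PowerSeries.mk (fun n => (Nat.card (FAS n) : ℚ) / n.factorial)
      = (3 * (X : ℚ⟦X⟧) - (X : ℚ⟦X⟧) ^ 3) * PowerSeries.exp ℚ := by

  have key : ∀ (f : ℚ⟦X⟧), (1 - (X : ℚ⟦X⟧)) ^ 2 * f = f - 2 * (X * f) + X * (X * f) := by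
    intro f; ring
  have key2 : ∀ (f : ℚ⟦X⟧), (3 * (X : ℚ⟦X⟧) - (X : ℚ⟦X⟧) ^ 3) * f
      = 3 * (X * f) - X * (X * (X * f)) := by
    intro f; ring
  have c2 : ∀ (m : ℕ) (f : ℚ⟦X⟧), coeff m (2 * f) = 2 * coeff m f := by
    intro m f; rw [two_mul, map_add, two_mul]
  have c3 : ∀ (m : ℕ) (f : ℚ⟦X⟧), coeff m (3 * f) = 3 * coeff m f := by
    intro m f
    have : (3 : ℚ⟦X⟧) * f = f + f + f := by ring
    rw [this, map_add, map_add]; ring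
  simp only [card_div]
  rw [key, key2]
  have p0 : psum 0 = 1 := by simp [psum]
  ext m
  simp only [map_sub, map_add, c2, c3]
  rcases m with _ | _ | _ | m
  · simp [coeff_zero_X_mul]
  · simp only [zero_add]
    simp [coeff_succ_X_mul, coeff_zero_X_mul, psum_succ, p0, coeff_exp]
    norm_num
  · simp [coeff_succ_X_mul, coeff_zero_X_mul, psum_succ, p0, coeff_exp]
    norm_num
  · simp only [coeff_succ_X_mul, coeff_mk, coeff_exp, psum_succ, Nat.factorial_succ]
    have : (m.factorial : ℚ) ≠ 0 := by positivity
    have h1 : (m : ℚ) + 1 ≠ 0 := by positivity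
    have h2 : (m : ℚ) + 1 + 1 ≠ 0 := by positivity
    have h3 : (m : ℚ) + 1 + 1 + 1 ≠ 0 := by positivity
    simp only [map_div₀, map_one, map_natCast]
    push_cast
    field_simp
    ring
end

section
/- For every n ≥ 1, the free proto-unital shelf FPUS(n) is finite with cardinality n + Σ_{k=1}^n k!·C(n,k) (equivalently, n − 1 + Σ_{k=0}^n k!·C(n,k)). -/
/-- The defining relations of a proto-unital shelf on the free semigroup on `n`
generators: self-distributivity `(x*y)*z ~ (x*z)*(y*z)`, and the identities
`x*y ~ y*(x*y)` and `x*y ~ (x*y)*y`. -/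
def pusRel (n : ℕ) : FreeSemigroup (Fin n) → FreeSemigroup (Fin n) → Prop :=
  fun a b =>
    (∃ x y z : FreeSemigroup (Fin n), a = (x * y) * z ∧ b = (x * z) * (y * z)) ∨
    (∃ x y : FreeSemigroup (Fin n), a = x * y ∧ b = y * (x * y)) ∨
    (∃ x y : FreeSemigroup (Fin n), a = x * y ∧ b = (x * y) * y)

/-- The free proto-unital shelf on `n` generators. -/
def FPUS (n : ℕ) : Type := (conGen (pusRel n)).Quotient

section aux

variable {S : Type*} [Semigroup S]

lemma pus_idem (h1 : ∀ x y : S, y * (x * y) = x * y) (a b : S) :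
    (a * b) * (a * b) = a * b := by
  have h := h1 b (a * b)
  rw [h1 a b] at h
  exact h

lemma pus_aab (h1 : ∀ x y : S, y * (x * y) = x * y) (a b : S) :
    a * (a * b) = a * b := by
  have h := pus_idem h1 a b
  rw [mul_assoc, h1 a b] at h
  exact h

/-- The product of a word in the monoid obtained by adjoining a unit. -/
def pusP {α : Type*} (g : α → S) (l : List α) : WithOne S :=
  (l.map (fun a => (g a : WithOne S))).prod

lemma pusP_cons {α : Type*} (g : α → S) (a : α) (l : List α) :
    pusP g (a :: l) = (g a : WithOne S) * pusP g l := by simp [pusP]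

lemma pusP_append {α : Type*} (g : α → S) (k l : List α) :
    pusP g (k ++ l) = pusP g k * pusP g l := by simp [pusP]

lemma pusP_coe {α : Type*} (g : α → S) (l : List α) (hl : l ≠ []) :
    ∃ s : S, pusP g l = s := by
  induction l with
  | nil => exact absurd rfl hl
  | cons a t ih =>
    rw [pusP_cons]
    by_cases ht : t = []
    · subst ht; exact ⟨g a, by simp [pusP]⟩
    · obtain ⟨s, hs⟩ := ih ht
      exact ⟨g a * s, by rw [hs, WithOne.coe_mul]⟩

lemma pusP_right {α : Type*} [DecidableEq α] (g : α → S)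
    (h1 : ∀ x y : S, y * (x * y) = x * y)
    (l : List α) (z : S) :
    pusP g l * (z : WithOne S) = pusP g l.dedup * (z : WithOne S) := by
  induction l with
  | nil => simp
  | cons a t ih =>
    by_cases ha : a ∈ t
    · rw [List.dedup_cons_of_mem ha, ← ih]
      obtain ⟨u, v, rfl⟩ := List.append_of_mem ha
      obtain ⟨w, hw⟩ : ∃ w : S, pusP g v * (z : WithOne S) = w := by
        by_cases hv : v = []
        · subst hv; exact ⟨z, by simp [pusP]⟩
        · obtain ⟨s, hs⟩ := pusP_coe g v hv
          exact ⟨s * z, by rw [hs, WithOne.coe_mul]⟩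
      simp only [pusP_cons, pusP_append, mul_assoc, hw]
      by_cases hu : u = []
      · subst hu
        simp only [pusP, List.map_nil, List.prod_nil, one_mul, ← WithOne.coe_mul]
        rw [pus_aab h1]
      · obtain ⟨s, hs⟩ := pusP_coe g u hu
        rw [hs]
        simp only [← WithOne.coe_mul]
        rw [← mul_assoc s, ← mul_assoc (g a), h1]
    · rw [List.dedup_cons_of_notMem ha, pusP_cons, pusP_cons, mul_assoc, mul_assoc, ih]

lemma pusP_left {α : Type*} [DecidableEq α] (g : α → S)
    (h1 : ∀ x y : S, y * (x * y) = x * y) (h2 : ∀ x y : S, (x * y) * y = x * y)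
    (l : List α) (z : S) :
    (z : WithOne S) * pusP g l = (z : WithOne S) * pusP g l.dedup := by
  induction l generalizing z with
  | nil => simp
  | cons a t ih =>
    by_cases ha : a ∈ t
    · rw [List.dedup_cons_of_mem ha, ← ih]
      obtain ⟨u, v, rfl⟩ := List.append_of_mem ha
      simp only [pusP_cons, pusP_append, ← mul_assoc]
      congr 1
      by_cases hu : u = []
      · subst hu
        simp only [pusP, List.map_nil, List.prod_nil, mul_one, ← WithOne.coe_mul]
        rw [h2]
      · obtain ⟨s, hs⟩ := pusP_coe g u hu
        rw [hs]
        simp only [← WithOne.coe_mul]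
        rw [mul_assoc, mul_assoc, h1, mul_assoc]
    · rw [List.dedup_cons_of_notMem ha, pusP_cons, pusP_cons, ← mul_assoc, ← mul_assoc,
        ← WithOne.coe_mul, ih]

lemma pusP_eq {α : Type*} [DecidableEq α] (g : α → S)
    (h1 : ∀ x y : S, y * (x * y) = x * y) (h2 : ∀ x y : S, (x * y) * y = x * y)
    (a b : α) (l : List α) :
    pusP g (a :: b :: l) = pusP g (a :: b :: l).dedup * pusP g (a :: b :: l).dedup := by
  obtain ⟨d, hd⟩ := pusP_coe g (a :: b :: l).dedup (by simp)
  obtain ⟨s, hs⟩ := pusP_coe g (a :: b :: l) (by simp)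
  obtain ⟨r, hr⟩ := pusP_coe g (b :: l) (by simp)
  have hsr : s = g a * r := by
    rw [pusP_cons, hr, ← WithOne.coe_mul] at hs
    exact (WithOne.coe_inj.1 hs).symm
  have hid : s * s = s := by rw [hsr]; exact pus_idem h1 _ _
  have e1 := pusP_left g h1 h2 (a :: b :: l) s
  have e2 := pusP_right g h1 (a :: b :: l) d
  rw [hs, hd] at *
  rw [← e2, ← e1, ← WithOne.coe_mul, hid]

end aux

/-- The underlying list. -/
def pusL {n : ℕ} (x : FreeSemigroup (Fin n)) : List (Fin n) := x.head :: x.tail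

lemma pusL_mul {n : ℕ} (x y : FreeSemigroup (Fin n)) : pusL (x * y) = pusL x ++ pusL y := rfl

abbrev PusNF (n : ℕ) : Type := Fin n ⊕ {l : List (Fin n) // l.Nodup ∧ l ≠ []}

/-- The normal form. -/
def pusF {n : ℕ} (x : FreeSemigroup (Fin n)) : PusNF n :=
  if x.tail = [] then Sum.inl x.head
  else Sum.inr ⟨(pusL x).dedup, List.nodup_dedup _, by simp [pusL]⟩

lemma pusF_mul {n : ℕ} (x y : FreeSemigroup (Fin n)) :
    pusF (x * y) = Sum.inr ⟨(pusL x ++ pusL y).dedup, List.nodup_dedup _, by simp [pusL]⟩ := by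
  have : (x * y).tail ≠ [] := by
    change x.tail ++ y.head :: y.tail ≠ []
    simp
  rw [pusF, if_neg this]
  rfl

lemma pusF_dedup {n : ℕ} {x y : FreeSemigroup (Fin n)} (h : pusF x = pusF y) :
    (pusL x).dedup = (pusL y).dedup := by
  unfold pusF at h
  split_ifs at h with h1 h2 h2
  · simp only [Sum.inl.injEq] at h
    simp [pusL, h1, h2, h]
  · simpa using h

lemma pus_dedup_append {α : Type*} [DecidableEq α] (k l : List α) :
    (k ++ l).dedup = (k.dedup ++ l.dedup).dedup := by
  rw [List.dedup_append, List.dedup_append k.dedup, List.dedup_idem]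
  induction k with
  | nil => simp
  | cons a t ih =>
    by_cases ha : a ∈ t
    · rw [List.dedup_cons_of_mem ha, ← ih, List.cons_union, List.insert_of_mem]
      simp [ha]
    · rw [List.dedup_cons_of_notMem ha, List.cons_union, List.cons_union, ih]

lemma pus_dedup_drop {α : Type*} [DecidableEq α] (k l : List α) (h : ∀ a ∈ k, a ∈ l) :
    (k ++ l).dedup = l.dedup := by
  induction k with
  | nil => rfl
  | cons a t ih =>
    rw [List.cons_append, List.dedup_cons_of_mem, ih]
    · intro b hb; exact h b (by simp [hb])
    · simp [h a (by simp)]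

/-- The kernel of the normal form. -/
def pusCon (n : ℕ) : Con (FreeSemigroup (Fin n)) where
  r := fun x y => pusF x = pusF y
  iseqv := ⟨fun _ => rfl, fun h => h.symm, fun h k => h.trans k⟩
  mul' := by
    intro w x y z h k
    rw [pusF_mul, pusF_mul]
    simp only [Sum.inr.injEq, Subtype.mk.injEq]
    rw [pus_dedup_append, pusF_dedup h, pusF_dedup k, ← pus_dedup_append]

lemma pus_conGen_le (n : ℕ) : conGen (pusRel n) ≤ pusCon n := by
  refine Con.conGen_le.2 ?_
  intro a b h
  change pusF a = pusF b
  rcases h with ⟨x, y, z, rfl, rfl⟩ | ⟨x, y, rfl, rfl⟩ | ⟨x, y, rfl, rfl⟩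
  · rw [pusF_mul, pusF_mul]
    simp only [Sum.inr.injEq, Subtype.mk.injEq, pusL_mul, List.append_assoc]
    rw [pus_dedup_append, ← pus_dedup_drop (pusL z) (pusL y ++ pusL z) (by simp +contextual),
      ← pus_dedup_append]
  · rw [pusF_mul, pusF_mul]
    simp only [Sum.inr.injEq, Subtype.mk.injEq, pusL_mul]
    rw [pus_dedup_drop (pusL y) (pusL x ++ pusL y) (by simp +contextual)]
  · rw [pusF_mul, pusF_mul]
    simp only [Sum.inr.injEq, Subtype.mk.injEq, pusL_mul, List.append_assoc]
    rw [pus_dedup_append (pusL x) (pusL y ++ pusL y), pus_dedup_drop (pusL y) (pusL y) (by simp),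
      ← pus_dedup_append]

lemma pus_coe_eq {n : ℕ} (x : FreeSemigroup (Fin n)) :
    (((x : (conGen (pusRel n)).Quotient)) : WithOne (conGen (pusRel n)).Quotient) =
      pusP (fun a => ((FreeSemigroup.of a : FreeSemigroup (Fin n)) : (conGen (pusRel n)).Quotient))
        (pusL x) := by
  induction x using FreeSemigroup.recOnMul with
  | ih1 a => simp [pusL, pusP]
  | ih2 a y _ hy =>
    rw [Con.coe_mul, WithOne.coe_mul, hy, pusL_mul, pusP_append]
    simp [pusL, pusP]

lemma pus_le_conGen (n : ℕ) (x y : FreeSemigroup (Fin n)) (h : pusF x = pusF y) :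
    ((x : (conGen (pusRel n)).Quotient)) = y := by
  have h1 : ∀ x y : (conGen (pusRel n)).Quotient, y * (x * y) = x * y := by
    intro x y
    induction x, y using Con.induction_on₂ with
    | _ x y =>
      have hr : conGen (pusRel n) (x * y) (y * (x * y)) :=
        ConGen.Rel.of _ _ (Or.inr (Or.inl ⟨x, y, rfl, rfl⟩))
      exact ((Con.eq _).2 hr).symm
  have h2 : ∀ x y : (conGen (pusRel n)).Quotient, (x * y) * y = x * y := by
    intro x y
    induction x, y using Con.induction_on₂ with
    | _ x y =>
      have hr : conGen (pusRel n) (x * y) ((x * y) * y) :=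
        ConGen.Rel.of _ _ (Or.inr (Or.inr ⟨x, y, rfl, rfl⟩))
      exact ((Con.eq _).2 hr).symm
  have hd := pusF_dedup h
  have key : ∀ w : FreeSemigroup (Fin n), w.tail ≠ [] →
      (((w : (conGen (pusRel n)).Quotient)) : WithOne (conGen (pusRel n)).Quotient) =
      pusP (fun a => ((FreeSemigroup.of a : FreeSemigroup (Fin n)) : (conGen (pusRel n)).Quotient))
        (pusL w).dedup *
      pusP (fun a => ((FreeSemigroup.of a : FreeSemigroup (Fin n)) : (conGen (pusRel n)).Quotient))
        (pusL w).dedup := by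
    rintro ⟨a, t⟩ hw
    rw [pus_coe_eq]
    cases t with
    | nil => exact absurd rfl hw
    | cons b l => exact pusP_eq _ h1 h2 a b l
  by_cases hx : x.tail = []
  · by_cases hy : y.tail = []
    · have : x = y := by
        simp only [pusF, hx, hy, if_true, Sum.inl.injEq] at h
        cases x; cases y; simp_all
      rw [this]
    · simp [pusF, hx, hy] at h
  · by_cases hy : y.tail = []
    · simp [pusF, hx, hy] at h
    · apply WithOne.coe_inj.1
      rw [key x hx, key y hy, hd]

lemma pusF_surj (n : ℕ) : Function.Surjective (pusF (n := n)) := by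
  rintro (a | ⟨l, hl, hne⟩)
  · exact ⟨FreeSemigroup.of a, by simp [pusF]⟩
  · cases l with
    | nil => exact absurd rfl hne
    | cons a t =>
      refine ⟨⟨a, a :: t⟩, ?_⟩
      simp only [pusF, pusL]
      rw [if_neg (by simp)]
      simp only [Sum.inr.injEq, Subtype.mk.injEq]
      rw [List.dedup_cons_of_mem (by simp), hl.dedup]

noncomputable def pusEquiv (n : ℕ) : FPUS n ≃ PusNF n :=
  Equiv.ofBijective
    (fun q : (conGen (pusRel n)).Quotient =>
      Con.liftOn q (pusF (n := n)) (fun _ _ h => pus_conGen_le n h))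
    ⟨by
      intro q r
      induction q, r using Con.induction_on₂ with
      | _ x y => exact pus_le_conGen n x y,
     fun b => by
      obtain ⟨x, hx⟩ := pusF_surj n b
      exact ⟨(x : (conGen (pusRel n)).Quotient), hx⟩⟩

noncomputable def pusListEquiv (n : ℕ) :
    (Σ k : Fin n, (Fin (k + 1) ↪ Fin n)) ≃ {l : List (Fin n) // l.Nodup ∧ l ≠ []} :=
  Equiv.ofBijective
    (fun p => ⟨List.ofFn p.2, List.nodup_ofFn.2 p.2.injective, by simp⟩)
    ⟨by
      rintro ⟨⟨k, hk⟩, e⟩ ⟨⟨m, hm⟩, f⟩ h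
      simp only [Subtype.mk.injEq] at h
      have hl := congrArg List.length h
      simp only [List.length_ofFn, Nat.add_right_cancel_iff] at hl
      subst hl
      have := List.ofFn_injective h
      have := DFunLike.coe_injective this
      rw [this],
     by
      rintro ⟨l, hl, hne⟩
      have hle : l.length ≤ n := by simpa using hl.length_le_card
      obtain ⟨k, hk⟩ : ∃ k, l.length = k + 1 :=
        Nat.exists_eq_succ_of_ne_zero (by simpa using hne)
      refine ⟨⟨⟨k, by omega⟩, ⟨fun i => l.get (i.cast hk.symm), ?_⟩⟩, ?_⟩
      · intro i j hij
        have := (List.nodup_iff_injective_get.1 hl) hij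
        simpa using this
      · apply Subtype.ext
        apply List.ext_get
        · simp [hk]
        · intro i h1 h2
          simp [-List.ofFn_succ]
          rfl⟩

/-- For `n ≥ 1`, the free proto-unital shelf `FPUS(n)` is finite with
cardinality `n + Σ_{k=1}^n k!·C(n,k)`. -/
theorem FPUS_card (n : ℕ) (hn : 1 ≤ n) :
    Finite (FPUS n) ∧
      Nat.card (FPUS n) = n + ∑ k ∈ Finset.Icc 1 n, k.factorial * n.choose k := by
  have E : FPUS n ≃ Fin n ⊕ (Σ k : Fin n, (Fin (k + 1) ↪ Fin n)) :=
    (pusEquiv n).trans (Equiv.sumCongr (Equiv.refl _) (pusListEquiv n).symm)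
  refine ⟨Finite.of_equiv _ E.symm, ?_⟩
  rw [Nat.card_congr E, Nat.card_eq_fintype_card]
  simp only [Fintype.card_sum, Fintype.card_fin, Fintype.card_sigma, Fintype.card_embedding_eq]
  congr 1
  rw [Fin.sum_univ_eq_sum_range (fun k => n.descFactorial (k + 1)) n, Finset.range_eq_Ico,
    Finset.sum_Ico_add' (fun k => n.descFactorial k) 0 n 1]
  refine Finset.sum_congr ?_ ?_
  · ext; simp
  · intro k _
    exact Nat.descFactorial_eq_factorial_mul_choose n k
end

section
/- For every n ≥ 1, the free proto-unital shelf FPUS(n) has exactly n! right zeros; that is, the set { r ∈ FPUS(n) : x*r = r for all x ∈ FPUS(n) } has cardinality n!. -/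
instance (n : ℕ) : Mul (FPUS n) :=
  inferInstanceAs (Mul (conGen (pusRel n)).Quotient)

namespace FPUSAux

variable {n : ℕ}

/-- Quotient map. -/
def mk (w : FreeSemigroup (Fin n)) : FPUS n := ((w : (conGen (pusRel n)).Quotient))

theorem mk_surj (x : FPUS n) : ∃ w, mk w = x := by
  induction x using Con.induction_on with
  | H w => exact ⟨w, rfl⟩

theorem mk_mul (u v : FreeSemigroup (Fin n)) : mk (u * v) = mk u * mk v := rfl

theorem mk_rel {u v : FreeSemigroup (Fin n)} (h : pusRel n u v) : mk u = mk v :=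
  (Con.eq _).2 (ConGen.Rel.of _ _ h)

theorem assoc (x y z : FPUS n) : x * y * z = x * (y * z) := by
  obtain ⟨x, rfl⟩ := mk_surj x
  obtain ⟨y, rfl⟩ := mk_surj y
  obtain ⟨z, rfl⟩ := mk_surj z
  simp only [← mk_mul, mul_assoc]

theorem rel1 (x y : FPUS n) : y * (x * y) = x * y := by
  obtain ⟨x, rfl⟩ := mk_surj x
  obtain ⟨y, rfl⟩ := mk_surj y
  exact (mk_rel (Or.inr (Or.inl ⟨x, y, rfl, rfl⟩))).symm

theorem rel2 (x y : FPUS n) : x * (y * y) = x * y := by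
  rw [← assoc]
  obtain ⟨x, rfl⟩ := mk_surj x
  obtain ⟨y, rfl⟩ := mk_surj y
  exact (mk_rel (Or.inr (Or.inr ⟨x, y, rfl, rfl⟩))).symm

theorem lemA (x z : FPUS n) : x * (x * z) = x * z := by
  have h1 := rel1 z (x * z)
  rw [rel1 x z] at h1
  rw [assoc, rel1 x z] at h1
  exact h1

theorem lemB (x y z : FPUS n) : x * (y * (x * z)) = y * (x * z) := by
  have h := rel1 y (x * z)
  rw [← h, assoc, lemA]

/-- Left action of a list of generators. -/
def act (l : List (Fin n)) (q : FPUS n) : FPUS n :=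
  l.foldr (fun a r => mk (FreeSemigroup.of a) * r) q

theorem act_cons (a : Fin n) (l : List (Fin n)) (q : FPUS n) :
    act (a :: l) q = mk (FreeSemigroup.of a) * act l q := rfl

theorem act_append (l m : List (Fin n)) (q : FPUS n) :
    act (l ++ m) q = act l (act m q) := by simp [act]

theorem act_mul (l : List (Fin n)) (q r : FPUS n) : act l (q * r) = act l q * r := by
  induction l with
  | nil => rfl
  | cons a l ih => rw [act_cons, act_cons, ih, assoc]

theorem act_eq_mul (l : List (Fin n)) (b : Fin n) :
    ∃ y : FPUS n, ∀ q, act (b :: l) q = y * q := by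
  induction l generalizing b with
  | nil => exact ⟨mk (FreeSemigroup.of b), fun q => rfl⟩
  | cons c l ih =>
    obtain ⟨y, hy⟩ := ih c
    exact ⟨mk (FreeSemigroup.of b) * y, fun q => by rw [act_cons, hy, assoc]⟩

theorem absorb (a : Fin n) (l : List (Fin n)) (q : FPUS n) (h : a ∈ l) :
    mk (FreeSemigroup.of a) * act l q = act l q := by
  obtain ⟨s, t, rfl⟩ := List.append_of_mem h
  rw [act_append, act_cons]
  cases s with
  | nil => exact lemA _ _
  | cons b s =>
    obtain ⟨y, hy⟩ := act_eq_mul s b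
    rw [hy]
    exact lemB _ _ _

theorem act_dedup (l : List (Fin n)) (q : FPUS n) : act l.dedup q = act l q := by
  induction l with
  | nil => rfl
  | cons a l ih =>
    by_cases h : a ∈ l
    · rw [List.dedup_cons_of_mem h, ih, act_cons, absorb a l q h]
    · rw [List.dedup_cons_of_notMem h, act_cons, act_cons, ih]

/-- Word ending in `a`. -/
def E (l : List (Fin n)) (a : Fin n) : FPUS n := act l (mk (FreeSemigroup.of a))

theorem E_mul (l m : List (Fin n)) (a b : Fin n) : E l a * E m b = E (l ++ a :: m) b := by
  rw [E, E, E, act_append, act_cons, act_mul]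

theorem E_surj (x : FPUS n) : ∃ l a, E l a = x := by
  obtain ⟨w, rfl⟩ := mk_surj x
  induction w using FreeSemigroup.recOnMul with
  | ih1 a => exact ⟨[], a, rfl⟩
  | ih2 a y _ h =>
    obtain ⟨l, b, h⟩ := h
    exact ⟨a :: l, b, by rw [mk_mul, ← h]; rfl⟩

theorem E_eq (l : List (Fin n)) (a : Fin n) (h : l ≠ []) :
    E l a = act (l ++ [a]).dedup (mk (FreeSemigroup.of a)) := by
  rw [act_dedup, act_append, act_cons]
  obtain ⟨l, b, rfl⟩ := l.eq_nil_or_concat.resolve_left h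
  simp only [E, List.concat_eq_append, act_append, act_cons]
  exact (congrArg (act l) (rel2 _ _)).symm

theorem last_dedup (l : List (Fin n)) (a : Fin n) : (l ++ [a]).dedup.getLast? = some a := by
  rw [List.dedup_append]
  obtain ⟨t, ht⟩ := List.suffix_union_right l ([a].dedup)
  rw [← ht]
  simp

theorem E_congr {l m : List (Fin n)} {a b : Fin n} (hl : l ≠ []) (hm : m ≠ [])
    (h : (l ++ [a]).dedup = (m ++ [b]).dedup) : E l a = E m b := by
  have : a = b := by
    have h1 := last_dedup l a
    rw [h, last_dedup m b] at h1
    exact (Option.some.inj h1).symm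
  subst this
  rw [E_eq l a hl, E_eq m a hm, h]

/-- Underlying list. -/
def toL (w : FreeSemigroup (Fin n)) : List (Fin n) := w.head :: w.tail

theorem toL_mul (u v : FreeSemigroup (Fin n)) : toL (u * v) = toL u ++ toL v := rfl

theorem dedup_app_of_subset {l m : List (Fin n)} (h : l ⊆ m) :
    (l ++ m).dedup = m.dedup := by
  induction l with
  | nil => rfl
  | cons a l ih =>
    rw [List.cons_append, List.dedup_cons_of_mem, ih]
    · exact fun x hx => h (List.mem_cons_of_mem _ hx)
    · exact List.mem_append_right _ (h List.mem_cons_self)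

theorem dedup_app_right {l m m' : List (Fin n)} (h : m.dedup = m'.dedup) :
    (l ++ m).dedup = (l ++ m').dedup := by
  rw [List.dedup_append, List.dedup_append, h]

theorem dedup_app_left (l m : List (Fin n)) :
    (l.dedup ++ m).dedup = (l ++ m).dedup := by
  induction l with
  | nil => rfl
  | cons a l ih =>
    by_cases h : a ∈ l
    · rw [List.dedup_cons_of_mem h, ih, List.cons_append, List.dedup_cons_of_mem]
      exact List.mem_append_left _ h
    · rw [List.dedup_cons_of_notMem h, List.cons_append, List.cons_append]
      by_cases h' : a ∈ m
      · rw [List.dedup_cons_of_mem (List.mem_append_right _ h'),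
          List.dedup_cons_of_mem (List.mem_append_right _ h'), ih]
      · rw [List.dedup_cons_of_notMem (by simp [h, h']),
          List.dedup_cons_of_notMem (by simp [h, h']), ih]

/-- Congruence of having the same sequence of last occurrences. -/
def cc (n : ℕ) : Con (FreeSemigroup (Fin n)) where
  r u v := (toL u).dedup = (toL v).dedup
  iseqv := ⟨fun _ => rfl, fun h => h.symm, fun h h' => h.trans h'⟩
  mul' := by
    intro w x y z h h'
    show (toL _ ++ toL _).dedup = (toL _ ++ toL _).dedup
    rw [dedup_app_right h', ← dedup_app_left, h, dedup_app_left]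

theorem le_cc : conGen (pusRel n) ≤ cc n := by
  refine Con.conGen_le.2 ?_
  rintro a b (⟨x, y, z, rfl, rfl⟩ | ⟨x, y, rfl, rfl⟩ | ⟨x, y, rfl, rfl⟩)
  · show (toL _).dedup = (toL _).dedup
    simp only [toL_mul, List.append_assoc]
    refine dedup_app_right ?_
    exact (dedup_app_of_subset (by intro t; simp +contextual)).symm
  · show (toL _).dedup = (toL _).dedup
    simp only [toL_mul]
    exact (dedup_app_of_subset (by intro t; simp +contextual)).symm
  · show (toL _).dedup = (toL _).dedup
    simp only [toL_mul, List.append_assoc]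
    exact dedup_app_right (dedup_app_of_subset (fun _ h => h)).symm

/-- Sequence of last occurrences. -/
def D (x : FPUS n) : List (Fin n) :=
  Con.liftOn (c := conGen (pusRel n)) x (fun w => (toL w).dedup) (fun _ _ h => le_cc h)

theorem D_mul (x y : FPUS n) : D (x * y) = (D x ++ D y).dedup := by
  obtain ⟨u, rfl⟩ := mk_surj x
  obtain ⟨v, rfl⟩ := mk_surj y
  show (toL u ++ toL v).dedup = ((toL u).dedup ++ (toL v).dedup).dedup
  rw [dedup_app_left]
  exact dedup_app_right (List.dedup_idem).symm

theorem D_nodup (x : FPUS n) : (D x).Nodup := by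
  obtain ⟨u, rfl⟩ := mk_surj x
  exact List.nodup_dedup _

theorem D_of (a : Fin n) : D (mk (FreeSemigroup.of a)) = [a] := rfl

theorem D_E (l : List (Fin n)) (a : Fin n) : D (E l a) = (l ++ [a]).dedup := by
  induction l with
  | nil => rfl
  | cons b l ih =>
    rw [E, act_cons, D_mul]
    change (_ ++ D (E l a)).dedup = _
    rw [ih, D_of]
    exact dedup_app_right (l := [b]) List.dedup_idem

theorem eq_of_D {x y : FPUS n} (hx : x * x = x) (hy : y * y = y) (h : D x = D y) : x = y := by
  obtain ⟨l, a, rfl⟩ := E_surj x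
  obtain ⟨m, b, rfl⟩ := E_surj y
  rw [← hx, ← hy, E_mul, E_mul]
  rw [← hx, ← hy, E_mul, E_mul, D_E, D_E] at h
  exact E_congr (by simp) (by simp) h

theorem sq_idem (x : FPUS n) : x * x * (x * x) = x * x := by
  rw [rel2, assoc, rel2]

theorem idem_prod (x y : FPUS n) : x * (y * y) * (x * (y * y)) = x * (y * y) := by
  rw [rel2, assoc, rel1, lemA]

/-- The bijection of right zeros with enumerations of the generators. -/
theorem bij (hn : 1 ≤ n) : Function.Bijective
    (fun r : {r : FPUS n // ∀ x : FPUS n, x * r = r} =>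
      (⟨D r.1, by
        have h : ∀ a, a ∈ D r.1 := fun a => by
          rw [← r.2 (mk (FreeSemigroup.of a)), D_mul, D_of]; simp
        rw [List.mem_toFinset, List.mem_permutations]
        exact (List.perm_ext_iff_of_nodup (D_nodup _) (List.nodup_finRange n)).2
          (by simp [h])⟩ : {l // l ∈ (List.finRange n).permutations.toFinset})) := by
  constructor
  · rintro ⟨x, hx⟩ ⟨y, hy⟩ h
    exact Subtype.ext (eq_of_D (hx x) (hy y) (congrArg Subtype.val h))
  · rintro ⟨L, hL⟩
    have hp := List.mem_permutations.1 (List.mem_toFinset.1 hL)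
    have hmem : ∀ a, a ∈ L := fun a => hp.mem_iff.2 (by simp)
    have hnd : L.Nodup := hp.nodup_iff.2 (List.nodup_finRange n)
    have hne : L ≠ [] := List.ne_nil_of_mem (hmem ⟨0, hn⟩)
    obtain ⟨l, a, rfl⟩ := L.eq_nil_or_concat.resolve_left hne
    rw [List.concat_eq_append] at hnd
    simp only [List.concat_eq_append] at hmem
    have hD : D (E l a) = l ++ [a] := by rw [D_E, hnd.dedup]
    have hDD : D (E l a * E l a) = l ++ [a] := by
      rw [D_mul, hD, dedup_app_of_subset (fun _ h => h), hnd.dedup]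
    refine ⟨⟨E l a * E l a, fun x => eq_of_D (idem_prod _ _) (sq_idem _) ?_⟩, ?_⟩
    · rw [D_mul, hDD, dedup_app_of_subset (fun t _ => hmem t), hnd.dedup]
    · exact Subtype.ext (by simpa using hDD)

end FPUSAux

/-- For `n ≥ 1`, the free proto-unital shelf `FPUS(n)` has exactly
`n!` right zeros, i.e. elements `r` with `x * r = r` for all `x`. -/
theorem FPUS_card_right_zeros (n : ℕ) (hn : 1 ≤ n) :
    Nat.card {r : FPUS n // ∀ x : FPUS n, x * r = r} = n.factorial := by
  rw [Nat.card_eq_of_bijective _ (FPUSAux.bij hn), Nat.card_eq_fintype_card, Fintype.card_coe,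
    List.toFinset_card_of_nodup (List.nodup_permutations _ (List.nodup_finRange n)),
    List.length_permutations, List.length_finRange]
end

section
/- For every natural number n, the free pre-unital shelf on n generators is finite with cardinality b_n = Σ_{k=1}^n k!·C(n,k). -/
/-- The defining relations of a pre-unital shelf on the free semigroup on `n`
generators: self-distributivity `(x*y)*z ~ (x*z)*(y*z)`, idempotence `x ~ x*x`,
and the identities `x*y ~ y*(x*y)` and `x*y ~ (x*y)*y`. -/
def preRel (n : ℕ) : FreeSemigroup (Fin n) → FreeSemigroup (Fin n) → Prop :=
  fun a b =>
    (∃ x y z : FreeSemigroup (Fin n), a = (x * y) * z ∧ b = (x * z) * (y * z)) ∨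
    (∃ x : FreeSemigroup (Fin n), a = x ∧ b = x * x) ∨
    (∃ x y : FreeSemigroup (Fin n), a = x * y ∧ b = y * (x * y)) ∨
    (∃ x y : FreeSemigroup (Fin n), a = x * y ∧ b = (x * y) * y)

/-- The free pre-unital shelf on `n` generators. -/
def FPtildeUS (n : ℕ) : Type := (conGen (preRel n)).Quotient

namespace FPAux

variable {α : Type}

/-- The underlying list of a word. -/
def toL (w : FreeSemigroup α) : List α := w.head :: w.tail

theorem toL_mul (a b : FreeSemigroup α) : toL (a * b) = toL a ++ toL b := by
  simp [toL]

variable [DecidableEq α]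

theorem dedup_app (l m : List α) :
    (l ++ m).dedup = l.dedup.filter (fun a => a ∉ m) ++ m.dedup := by
  induction l with
  | nil => simp
  | cons a l ih =>
    by_cases h : a ∈ l
    · rw [List.cons_append, List.dedup_cons_of_mem (by simp [h]), List.dedup_cons_of_mem h, ih]
    · by_cases h2 : a ∈ m
      · rw [List.cons_append, List.dedup_cons_of_mem (by simp [h2]), List.dedup_cons_of_notMem h, ih]
        simp [h2]
      · rw [List.cons_append, List.dedup_cons_of_notMem (by simp [h, h2]),
          List.dedup_cons_of_notMem h, ih]
        simp [h2]

/-- The congruence given by equality of deduplicated words. -/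
def K (α : Type) [DecidableEq α] : Con (FreeSemigroup α) where
  r a b := (toL a).dedup = (toL b).dedup
  iseqv := ⟨fun _ => rfl, fun h => h.symm, fun h g => h.trans g⟩
  mul' := by
    intro w x y z h g
    have hm : ∀ a, a ∈ toL y ↔ a ∈ toL z := fun a => by
      rw [← List.mem_dedup, g, List.mem_dedup]
    change (toL (w * y)).dedup = (toL (x * z)).dedup
    rw [toL_mul, toL_mul, dedup_app, dedup_app, h, g]
    simp [hm]

theorem dedup_sub (l m : List α) (h : l ⊆ m) : (l ++ m).dedup = m.dedup := by
  rw [dedup_app, List.filter_eq_nil_iff.2, List.nil_append]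
  intro a ha
  simpa using h (List.mem_dedup.1 ha)

theorem le_K (n : ℕ) : conGen (preRel n) ≤ K (Fin n) := by
  rw [Con.conGen_le]
  intro a b h
  change (toL a).dedup = (toL b).dedup
  rcases h with ⟨x, y, z, rfl, rfl⟩ | ⟨x, rfl, rfl⟩ | ⟨x, y, rfl, rfl⟩ | ⟨x, y, rfl, rfl⟩
  · simp only [toL_mul, List.append_assoc]
    rw [dedup_app, dedup_app (toL x), dedup_sub (toL z)]
    · congr 1
      apply List.filter_congr
      simp
    · simp
  · rw [toL_mul, dedup_sub _ _ (by simp)]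
  · simp only [toL_mul]
    rw [dedup_sub (toL y) _ (by simp)]
  · simp only [toL_mul, List.append_assoc]
    rw [dedup_app, dedup_app (toL x), dedup_sub (toL y) _ (by simp)]
    simp

abbrev S (n : ℕ) := (conGen (preRel n)).Quotient

theorem band (n : ℕ) (x y : WithOne (S n)) : y * (x * y) = x * y := by
  have idem : ∀ x : S n, x * x = x := by
    intro x
    induction x using Con.induction_on with
    | _ x =>
      rw [← Con.coe_mul]
      exact ((Con.eq _).2 (ConGen.Rel.of (r := preRel n) _ _ (Or.inr (Or.inl ⟨x, rfl, rfl⟩)))).symm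
  have h3 : ∀ x y : S n, y * (x * y) = x * y := by
    intro x y
    induction x using Con.induction_on with
    | _ x =>
    induction y using Con.induction_on with
    | _ y =>
      rw [← Con.coe_mul, ← Con.coe_mul]
      exact ((Con.eq _).2 (ConGen.Rel.of (r := preRel n) _ _ (Or.inr (Or.inr (Or.inl ⟨x, y, rfl, rfl⟩))))).symm
  refine WithOne.cases_on y (by simp) fun y => ?_
  refine WithOne.cases_on x ?_ fun x => ?_
  · rw [one_mul, ← WithOne.coe_mul, idem]
  · rw [← WithOne.coe_mul, ← WithOne.coe_mul, h3]

def phi (n : ℕ) (l : List (Fin n)) : WithOne (S n) :=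
  (l.map (fun a => (((FreeSemigroup.of a : FreeSemigroup (Fin n)) : S n) : WithOne (S n)))).prod

theorem phi_append (n : ℕ) (l m : List (Fin n)) : phi n (l ++ m) = phi n l * phi n m := by
  simp [phi]

theorem phi_cons (n : ℕ) (a : Fin n) (m : List (Fin n)) :
    phi n (a :: m) = phi n [a] * phi n m := by
  simp [phi]

theorem phi_toL (n : ℕ) (w : FreeSemigroup (Fin n)) :
    phi n (toL w) = ((w : S n) : WithOne (S n)) := by
  induction w using FreeSemigroup.recOnMul with
  | ih1 x => simp [phi, toL, FreeSemigroup.of]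
  | ih2 x y h1 h2 => rw [toL_mul, phi_append, h1, h2, ← WithOne.coe_mul, ← Con.coe_mul]

theorem phi_dedup (n : ℕ) (l : List (Fin n)) : phi n l.dedup = phi n l := by
  induction l with
  | nil => simp
  | cons a l ih =>
    by_cases h : a ∈ l
    · rw [List.dedup_cons_of_mem h, ih]
      obtain ⟨s, t, rfl⟩ := List.append_of_mem h
      rw [phi_cons n a (s ++ a :: t), phi_append, phi_cons n a t, ← mul_assoc, ← mul_assoc,
        ← mul_assoc, mul_assoc (phi n [a]), band]
    · rw [List.dedup_cons_of_notMem h, phi_cons, ih, ← phi_cons]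

theorem K_eq (n : ℕ) (a b : FreeSemigroup (Fin n)) :
    conGen (preRel n) a b ↔ (toL a).dedup = (toL b).dedup := by
  constructor
  · intro h
    exact le_K n h
  · intro h
    rw [← Con.eq]
    apply WithOne.coe_injective
    rw [← phi_toL, ← phi_toL, ← phi_dedup, h, phi_dedup]

abbrev T (n : ℕ) := {l : List (Fin n) // l.Nodup ∧ l ≠ []}

noncomputable def toT (n : ℕ) : S n → T n :=
  Quotient.lift (fun a => ⟨(toL a).dedup, List.nodup_dedup _, by simp [toL]⟩)
    (fun a b h => Subtype.ext ((K_eq n a b).1 h))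

theorem toT_bij (n : ℕ) : Function.Bijective (toT n) := by
  constructor
  · intro x y
    induction x using Con.induction_on with
    | _ x =>
    induction y using Con.induction_on with
    | _ y =>
      intro h
      exact (Con.eq _).2 ((K_eq n x y).2 (congrArg Subtype.val h))
  · rintro ⟨l, hl, hne⟩
    cases l with
    | nil => exact absurd rfl hne
    | cons a l =>
      exact ⟨((⟨a, l⟩ : FreeSemigroup (Fin n)) : S n), Subtype.ext (List.Nodup.dedup hl)⟩

def ofE (n : ℕ) (p : Σ k : Fin n, (Fin (k + 1) ↪ Fin n)) : T n :=
  ⟨List.ofFn p.2, List.nodup_ofFn.2 p.2.injective, by simp⟩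

theorem ofE_bij (n : ℕ) : Function.Bijective (ofE n) := by
  constructor
  · rintro ⟨⟨k, hk⟩, e⟩ ⟨⟨k', hk'⟩, e'⟩ h
    have h' : List.ofFn e = List.ofFn e' := congrArg Subtype.val h
    have hl : k = k' := by simpa using congrArg List.length h'
    subst hl
    have := List.ofFn_injective h'
    have : e = e' := DFunLike.coe_injective this
    subst this
    rfl
  · rintro ⟨l, hl, hne⟩
    have hlen : l.length ≤ n := by simpa using hl.length_le_card
    obtain ⟨k, hk⟩ : ∃ k, l.length = k + 1 :=
      Nat.exists_eq_succ_of_ne_zero (by simpa using hne)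
    refine ⟨⟨⟨k, by omega⟩, ⟨fun i => l.get (i.cast hk.symm), ?_⟩⟩, ?_⟩
    · intro i j h
      simpa using (List.nodup_iff_injective_get.1 hl) h
    · apply Subtype.ext
      apply List.ext_get
      · simp [ofE, hk]
      · intro i h1 h2
        simp [ofE, -List.ofFn_succ]
        rfl

end FPAux


/-- For every `n`, the free pre-unital shelf on `n` generators is
finite with cardinality `Σ_{k=1}^n k!·C(n,k)`. -/
theorem FPtildeUS_card (n : ℕ) :
    Finite (FPtildeUS n) ∧
      Nat.card (FPtildeUS n) = ∑ k ∈ Finset.Icc 1 n, k.factorial * n.choose k := by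
  let e := (Equiv.ofBijective _ (FPAux.toT_bij n)).trans
    (Equiv.ofBijective _ (FPAux.ofE_bij n)).symm
  refine ⟨Finite.of_injective (β := Σ k : Fin n, (Fin (k + 1) ↪ Fin n)) e e.injective, ?_⟩
  refine (Nat.card_congr e).trans ?_
  rw [Nat.card_eq_fintype_card, Fintype.card_sigma]
  simp only [Fintype.card_embedding_eq, Fintype.card_fin, Nat.descFactorial_eq_factorial_mul_choose]
  rw [Fin.sum_univ_eq_sum_range (fun k => (k + 1).factorial * n.choose (k + 1)),
    Finset.range_eq_Ico, Finset.sum_Ico_add' (fun k => k.factorial * n.choose k)]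
  rfl
end

section
/- For every natural number n, the free unital shelf FUS(n) is finite with cardinality Σ_{k=0}^n k!·C(n,k). -/
/-- The self-distributivity relation on the free monoid on `n` generators:
`(x*y)*z` is related to `(x*z)*(y*z)`. -/
def shelfRelM (n : ℕ) : FreeMonoid (Fin n) → FreeMonoid (Fin n) → Prop :=
  fun a b => ∃ x y z : FreeMonoid (Fin n), a = (x * y) * z ∧ b = (x * z) * (y * z)

/-- The free unital shelf on `n` generators: the quotient of the free monoid on
`n` generators by the smallest multiplicative congruence containing the
self-distributivity relation. -/
def FUS (n : ℕ) : Type := (conGen (shelfRelM n)).Quotient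

theorem dedup_append_filter {α : Type*} [DecidableEq α] (a b : List α) :
    (a ++ b).dedup = a.dedup.filter (fun x => decide (x ∉ b)) ++ b.dedup := by
  induction a with
  | nil => simp
  | cons x a ih =>
    by_cases hb : x ∈ b
    · rw [List.cons_append, List.dedup_cons_of_mem (by simp [hb]), ih]
      by_cases ha : x ∈ a
      · rw [List.dedup_cons_of_mem ha]
      · rw [List.dedup_cons_of_notMem ha]
        simp [hb]
    · by_cases ha : x ∈ a
      · rw [List.cons_append, List.dedup_cons_of_mem (by simp [ha]), ih, List.dedup_cons_of_mem ha]
      · rw [List.cons_append, List.dedup_cons_of_notMem (by simp [ha, hb]), ih,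
          List.dedup_cons_of_notMem ha]
        simp [hb]

/-- Words are related when their last-occurrence lists agree. -/
def dedupCon (n : ℕ) : Con (FreeMonoid (Fin n)) where
  r a b := a.toList.dedup = b.toList.dedup
  iseqv := ⟨fun _ => rfl, fun h => h.symm, fun h k => h.trans k⟩
  mul' := by
    intro a b c d h k
    have hm : ∀ x, x ∈ c.toList ↔ x ∈ d.toList := by
      intro x
      rw [← List.mem_dedup, k, List.mem_dedup]
    change (a.toList ++ c.toList).dedup = (b.toList ++ d.toList).dedup
    change a.toList.dedup = b.toList.dedup at h
    change c.toList.dedup = d.toList.dedup at k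
    rw [dedup_append_filter, dedup_append_filter, h, k]
    simp only [hm]

theorem shelf_le (n : ℕ) : conGen (shelfRelM n) ≤ dedupCon n := by
  rw [Con.conGen_le]
  rintro a b ⟨x, y, z, rfl, rfl⟩
  change ((x.toList ++ y.toList) ++ z.toList).dedup
    = ((x.toList ++ z.toList) ++ (y.toList ++ z.toList)).dedup
  have e : (z.toList.dedup.filter fun a => decide (a ∉ y.toList ++ z.toList)) = [] := by
    rw [List.filter_eq_nil_iff]
    intro a ha
    have := List.mem_dedup.1 ha
    simp [this]
  rw [List.append_assoc, dedup_append_filter, dedup_append_filter (x.toList ++ z.toList),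
    dedup_append_filter x.toList z.toList, List.filter_append, e, List.append_nil,
    List.filter_filter]
  congr 1
  apply List.filter_congr
  intro a _
  by_cases h1 : a ∈ y.toList <;> by_cases h2 : a ∈ z.toList <;> simp [h1, h2]

theorem shelf_absorb (n : ℕ) (y z : FreeMonoid (Fin n)) :
    conGen (shelfRelM n) (z * (y * z)) (y * z) := by
  apply Con.symm
  exact ConGen.Rel.of _ _ ⟨1, y, z, by simp, by simp⟩

theorem shelf_dedup (n : ℕ) (l : List (Fin n)) :
    conGen (shelfRelM n) (FreeMonoid.ofList l) (FreeMonoid.ofList l.dedup) := by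
  induction l with
  | nil => exact Con.refl _ _
  | cons x l ih =>
    by_cases hx : x ∈ l
    · rw [List.dedup_cons_of_mem hx]
      refine Con.trans _ ?_ ih
      obtain ⟨s, t, rfl⟩ := List.append_of_mem hx
      have h := shelf_absorb n (FreeMonoid.ofList s) (FreeMonoid.of x)
      have h2 := Con.mul _ h (Con.refl _ (FreeMonoid.ofList t))
      have e1 : FreeMonoid.ofList (x :: (s ++ x :: t)) = FreeMonoid.of x *
          (FreeMonoid.ofList s * FreeMonoid.of x) * FreeMonoid.ofList t := by
        simp [FreeMonoid.ofList_cons, FreeMonoid.ofList_append, mul_assoc]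
      have e2 : FreeMonoid.ofList (s ++ x :: t) =
          (FreeMonoid.ofList s * FreeMonoid.of x) * FreeMonoid.ofList t := by
        simp [FreeMonoid.ofList_cons, FreeMonoid.ofList_append, mul_assoc]
      rw [e1, e2]
      exact h2
    · rw [List.dedup_cons_of_notMem hx, FreeMonoid.ofList_cons, FreeMonoid.ofList_cons]
      exact Con.mul _ (Con.refl _ _) ih

/-- The normal form map. -/
def fusNF (n : ℕ) : FUS n → {l : List (Fin n) // l.Nodup} :=
  Quotient.lift (fun a : FreeMonoid (Fin n) => ⟨a.toList.dedup, List.nodup_dedup _⟩)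
    (fun _ _ h => Subtype.ext (shelf_le n h))

theorem fusNF_bij (n : ℕ) : Function.Bijective (fusNF n) := by
  constructor
  · intro a b
    refine Quotient.inductionOn₂ a b ?_
    intro a b h
    have h' : a.toList.dedup = b.toList.dedup := congrArg Subtype.val h
    apply Quotient.sound
    have h1 := shelf_dedup n a.toList
    have h2 := shelf_dedup n b.toList
    rw [← h'] at h2
    exact Con.trans _ h1 (Con.symm _ h2)
  · rintro ⟨l, hl⟩
    exact ⟨Quotient.mk _ (FreeMonoid.ofList l), Subtype.ext hl.dedup⟩

/-- Nodup lists from embeddings. -/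
def embList (n : ℕ) : (Σ k : Fin (n + 1), (Fin k ↪ Fin n)) → {l : List (Fin n) // l.Nodup} :=
  fun p => ⟨List.ofFn p.2, List.nodup_ofFn.2 p.2.injective⟩

theorem embList_bij (n : ℕ) : Function.Bijective (embList n) := by
  constructor
  · rintro ⟨⟨k, hk⟩, f⟩ ⟨⟨m, hm⟩, g⟩ h
    have h' : List.ofFn f = List.ofFn g := congrArg Subtype.val h
    have hkm : k = m := by simpa using congrArg List.length h'
    subst hkm
    have := List.ofFn_injective h'
    have : f = g := DFunLike.coe_injective this
    rw [this]
  · rintro ⟨l, hl⟩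
    have hlen : l.length < n + 1 := by
      have := hl.length_le_card
      simp at this
      omega
    exact ⟨⟨⟨l.length, hlen⟩, ⟨l.get, List.nodup_iff_injective_get.1 hl⟩⟩,
      Subtype.ext (List.ofFn_get l)⟩

/-- For every `n`, the free unital shelf `FUS(n)` is finite with
cardinality `Σ_{k=0}^n k!·C(n,k)`. -/
theorem FUS_card (n : ℕ) :
    Finite (FUS n) ∧
      Nat.card (FUS n) = ∑ k ∈ Finset.range (n + 1), k.factorial * n.choose k := by
  have e := (Equiv.ofBijective _ (fusNF_bij n)).trans (Equiv.ofBijective _ (embList_bij n)).symm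
  refine ⟨Finite.of_equiv _ e.symm, ?_⟩
  rw [Nat.card_congr e, Nat.card_eq_fintype_card, Fintype.card_sigma, Finset.sum_range]
  refine Finset.sum_congr rfl fun k _ => ?_
  rw [Fintype.card_embedding_eq, Fintype.card_fin, Fintype.card_fin,
    Nat.descFactorial_eq_factorial_mul_choose]
end

section
/- Let α be a type with decidable equality, and on lists over α define w₁ ⋄ w₂ := (the sublist of w₁ consisting of letters not occurring in w₂) ++ w₂, i.e. w₁ ⋄ w₂ = w₁.filter (· ∉ w₂) ++ w₂. Then ⋄ is right self-distributive ((u ⋄ v) ⋄ w = (u ⋄ w) ⋄ (v ⋄ w)), associative, idempotent (w ⋄ w = w), and satisfies u ⋄ v = v ⋄ (u ⋄ v) and (u ⋄ v) ⋄ v = u ⋄ v for all lists u, v, w. In particular, lists over α with the operation ⋄ form a pre-unital shelf. -/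
/-- The operation `w₁ ⋄ w₂ = w₁.filter (· ∉ w₂) ++ w₂` on lists. -/
def listOp {α : Type*} [DecidableEq α] (u v : List α) : List α :=
  u.filter (fun a => decide (a ∉ v)) ++ v

theorem listOp_absorb {α : Type*} [DecidableEq α] (u v : List α) (h : ∀ a ∈ u, a ∈ v) :
    listOp u v = v := by
  unfold listOp
  have : u.filter (fun a => decide (a ∉ v)) = [] := by
    rw [List.filter_eq_nil_iff]
    intro a ha
    simpa using h a ha
  rw [this, List.nil_append]

theorem listOp_assoc {α : Type*} [DecidableEq α] (u v w : List α) :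
    listOp (listOp u v) w = listOp u (listOp v w) := by
  unfold listOp
  rw [List.filter_append, List.filter_filter, List.append_assoc]
  congr 1
  apply List.filter_congr
  intro a _
  by_cases h1 : a ∈ v <;> by_cases h2 : a ∈ w <;> simp [h1, h2]

/-- Lists over a type with decidable equality, with the operation
`w₁ ⋄ w₂ = w₁.filter (· ∉ w₂) ++ w₂`, form a pre-unital shelf: the operation is
right self-distributive, associative, idempotent, and satisfies
`u ⋄ v = v ⋄ (u ⋄ v)` and `(u ⋄ v) ⋄ v = u ⋄ v`. -/
theorem lists_form_pre_unital_shelf {α : Type*} [DecidableEq α] :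
    (∀ u v w : List α, listOp (listOp u v) w = listOp (listOp u w) (listOp v w)) ∧
    (∀ u v w : List α, listOp (listOp u v) w = listOp u (listOp v w)) ∧
    (∀ w : List α, listOp w w = w) ∧
    (∀ u v : List α, listOp u v = listOp v (listOp u v)) ∧
    (∀ u v : List α, listOp (listOp u v) v = listOp u v) := by
  have idem : ∀ w : List α, listOp w w = w := fun w => listOp_absorb w w fun _ h => h
  have ab : ∀ u v : List α, listOp v (listOp u v) = listOp u v := fun u v =>
    listOp_absorb _ _ fun _ h => List.mem_append_right _ h
  refine ⟨fun u v w => ?_, listOp_assoc, idem, fun u v => (ab u v).symm, fun u v => ?_⟩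
  · rw [listOp_assoc u w, ab, listOp_assoc]
  · rw [listOp_assoc, idem]
end

section
/- Let (X,*) be a shelf and let r, c ∈ X satisfy x*r = c for all x ∈ X (r is a right c-fixed element). For n ≥ 0 let C_n be the free abelian group on the set X^{n+1} of (n+1)-tuples, and let the two-term (rack) boundary ∂_n : C_n → C_{n-1} (n ≥ 1) be the ℤ-linear map sending a generator (x_0,…,x_n) to Σ_{i=1}^n (−1)^i [ (x_0,…,x_{i-1},x_{i+1},…,x_n) − (x_0*x_i, x_1*x_i, …, x_{i-1}*x_i, x_{i+1},…,x_n) ], with ∂_0 := 0. Define f_n : C_n → C_{n+1} ℤ-linearly by f_n(x_0,…,x_n) = (−1)^{n+1}(x_0,…,x_n,r), and let α_n : C_n → C_n be the ℤ-linear map sending every generator to (c,c,…,c). Then for every n ≥ 0, ∂_{n+1} ∘ f_n + f_{n-1} ∘ ∂_n = id_{C_n} − α_n (where the term f_{-1} ∘ ∂_0 is interpreted as 0 when n = 0); i.e., f is a chain homotopy between the identity and the constant chain map onto (c,…,c). -/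
namespace RackHomology

variable {X : Type*}

/-- The chain module `C_n`: the free abelian group (as a `ℤ`-module) on the set of
`(n+1)`-tuples of elements of `X`. -/
abbrev C (X : Type*) (n : ℕ) : Type _ := (Fin (n + 1) → X) →₀ ℤ

/-- The `i`-th face map for the trivial operation: delete the `i`-th coordinate. -/
def dTriv {n : ℕ} (i : Fin (n + 2)) (x : Fin (n + 2) → X) : Fin (n + 1) → X :=
  fun j => x (i.succAbove j)

/-- The `i`-th face map for the operation `op`: delete the `i`-th coordinate and
act by `x_i` on the right on all earlier coordinates. -/
def dOp (op : X → X → X) {n : ℕ} (i : Fin (n + 2)) (x : Fin (n + 2) → X) :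
    Fin (n + 1) → X :=
  fun j => if (j : ℕ) < (i : ℕ) then op (x (Fin.castSucc j)) (x i) else x (i.succAbove j)

/-- The two-term (rack) boundary map `∂_{n+1} : C_{n+1} → C_n`, sending a generator
`(x_0, …, x_{n+1})` to
`Σ_{i=1}^{n+1} (−1)^i [(x_0,…,x̂_i,…,x_{n+1}) − (x_0*x_i,…,x_{i-1}*x_i,x_{i+1},…,x_{n+1})]`. -/
noncomputable def rackBoundary (op : X → X → X) (n : ℕ) :
    C X (n + 1) →ₗ[ℤ] C X n :=
  Finsupp.lift (C X n) ℤ (Fin (n + 2) → X) fun x =>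
    ∑ i ∈ Finset.univ.filter (fun i : Fin (n + 2) => i ≠ 0),
      ((-1 : ℤ) ^ (i : ℕ)) •
        (Finsupp.single (dTriv i x) 1 - Finsupp.single (dOp op i x) 1)

/-- The chain homotopy `f_n : C_n → C_{n+1}`, sending a generator `(x_0, …, x_n)`
to `(−1)^{n+1} (x_0, …, x_n, r)`. -/
noncomputable def homotopy (r : X) (n : ℕ) : C X n →ₗ[ℤ] C X (n + 1) :=
  Finsupp.lift (C X (n + 1)) ℤ (Fin (n + 1) → X) fun x =>
    ((-1 : ℤ) ^ (n + 1)) • Finsupp.single (Fin.snoc x r) 1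

/-- The constant chain map `α_n : C_n → C_n`, sending every generator to
`(c, c, …, c)`. -/
noncomputable def constMap (c : X) (n : ℕ) : C X n →ₗ[ℤ] C X n :=
  Finsupp.lift (C X n) ℤ (Fin (n + 1) → X) fun _ =>
    Finsupp.single (fun _ => c) 1

theorem dTriv_snoc_last {n : ℕ} (x : Fin (n + 1) → X) (r : X) :
    dTriv (Fin.last (n + 1)) (Fin.snoc x r : Fin (n + 2) → X) = x := by
  funext j
  simp [dTriv]

theorem dOp_snoc_last (op : X → X → X) (r c : X) (hr : ∀ x : X, op x r = c) {n : ℕ}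
    (x : Fin (n + 1) → X) :
    dOp op (Fin.last (n + 1)) (Fin.snoc x r : Fin (n + 2) → X) = fun _ => c := by
  funext j
  have hj : (j : ℕ) < n + 1 := j.isLt
  simp [dOp, hr]
  omega

theorem dTriv_snoc_castSucc {n : ℕ} (i : Fin (n + 2)) (x : Fin (n + 2) → X) (r : X) :
    dTriv i.castSucc (Fin.snoc x r : Fin (n + 3) → X) = Fin.snoc (dTriv i x) r := by
  funext j
  refine Fin.lastCases ?_ (fun k => ?_) j
  · simp [dTriv]
  · simp [dTriv, Fin.castSucc_succAbove_castSucc]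

theorem dOp_snoc_castSucc (op : X → X → X) {n : ℕ} (i : Fin (n + 2)) (x : Fin (n + 2) → X)
    (r : X) :
    dOp op i.castSucc (Fin.snoc x r : Fin (n + 3) → X) = Fin.snoc (dOp op i x) r := by
  funext j
  have h := congrFun (dTriv_snoc_castSucc i x r) j
  revert h
  refine Fin.lastCases ?_ (fun k => ?_) j
  · intro h
    have hi : ¬ (n + 1 < (i : ℕ)) := by omega
    simp only [dTriv, Fin.snoc_last] at h
    simp [dOp, hi, h]
  · intro h
    simp only [dTriv, Fin.snoc_castSucc] at h
    simp only [dOp, Fin.snoc_castSucc, Fin.val_castSucc, h]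

theorem rackBoundary_single (op : X → X → X) (n : ℕ) (x : Fin (n + 2) → X) :
    rackBoundary op n (Finsupp.single x 1) =
      ∑ i : Fin (n + 2), if i ≠ 0 then ((-1 : ℤ) ^ (i : ℕ)) •
        (Finsupp.single (dTriv i x) (1 : ℤ) - Finsupp.single (dOp op i x) 1) else 0 := by
  simp only [rackBoundary, Finsupp.lift_apply]
  rw [Finsupp.sum_single_index (by simp), one_smul, Finset.sum_filter]

theorem homotopy_single (r : X) (n : ℕ) (x : Fin (n + 1) → X) :
    homotopy r n (Finsupp.single x 1) =
      ((-1 : ℤ) ^ (n + 1)) • Finsupp.single (Fin.snoc x r) (1 : ℤ) := by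
  simp only [homotopy, Finsupp.lift_apply]
  rw [Finsupp.sum_single_index (by simp), one_smul]

theorem constMap_single (c : X) (n : ℕ) (x : Fin (n + 1) → X) :
    constMap c n (Finsupp.single x 1) = Finsupp.single (fun _ => c) (1 : ℤ) := by
  simp only [constMap, Finsupp.lift_apply]
  rw [Finsupp.sum_single_index (by simp), one_smul]

theorem neg_one_pow_smul_self {M : Type*} [AddCommGroup M] (k : ℕ) (m : M) :
    ((-1 : ℤ) ^ k) • ((-1 : ℤ) ^ k) • m = m := by
  rw [smul_smul, ← mul_pow]
  simp

/-- Let `(X,*)` be a shelf with a right `c`-fixed element `r`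
(`x*r = c` for all `x`). Then the maps `f_n` form a chain homotopy between the
identity and the constant chain map onto `(c,…,c)`:
`∂_1 ∘ f_0 = id − α_0`, and for all `n`,
`∂_{n+2} ∘ f_{n+1} + f_n ∘ ∂_{n+1} = id − α_{n+1}`. -/
theorem chain_homotopy_of_right_fixed (op : X → X → X)
    (sd : ∀ a b c : X, op (op a b) c = op (op a c) (op b c))
    (r c : X) (hr : ∀ x : X, op x r = c) :
    (rackBoundary op 0 ∘ₗ homotopy r 0 = LinearMap.id - constMap c 0) ∧
    (∀ n : ℕ,
      rackBoundary op (n + 1) ∘ₗ homotopy r (n + 1)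
          + homotopy r n ∘ₗ rackBoundary op n
        = LinearMap.id - constMap c (n + 1)) := by
  constructor
  · refine Finsupp.lhom_ext' fun x => LinearMap.ext_ring ?_
    simp only [LinearMap.comp_apply, Finsupp.lsingle_apply, LinearMap.sub_apply,
      LinearMap.id_apply, homotopy_single, constMap_single, map_smul, rackBoundary_single]
    rw [Fin.sum_univ_castSucc, dTriv_snoc_last, dOp_snoc_last op r c hr]
    simp
  · intro n
    refine Finsupp.lhom_ext' fun x => LinearMap.ext_ring ?_
    simp only [LinearMap.comp_apply, Finsupp.lsingle_apply, LinearMap.sub_apply,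
      LinearMap.add_apply,
      LinearMap.id_apply, homotopy_single, constMap_single, map_smul, rackBoundary_single]
    rw [Fin.sum_univ_castSucc, dTriv_snoc_last, dOp_snoc_last op r c hr,
      if_pos (Fin.last_pos.ne'), smul_add, Fin.val_last, neg_one_pow_smul_self, map_sum,
      Finset.smul_sum, add_right_comm, ← Finset.sum_add_distrib, Finset.sum_eq_zero, zero_add]
    intro i _
    by_cases hi : i = 0
    · simp [hi]
    · have hi' : i.castSucc ≠ 0 := by simpa using hi
      rw [if_pos hi, if_pos hi', dTriv_snoc_castSucc, dOp_snoc_castSucc, map_smul, map_sub,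
        homotopy_single, homotopy_single, ← smul_sub, Fin.val_castSucc,
        smul_comm ((-1 : ℤ) ^ (i : ℕ)), ← add_smul, pow_succ _ (n + 1)]
      simp

end RackHomology
end

section
/- Let (X,*) be a shelf possessing a right fixed element, i.e. there exist r, c ∈ X with x*r = c for all x ∈ X. For n ≥ 0 let C_n be the free abelian group on X^{n+1}, and let the two-term (rack) boundary ∂_n : C_n → C_{n-1} (n ≥ 1) be the ℤ-linear map sending a generator (x_0,…,x_n) to Σ_{i=1}^n (−1)^i [ (x_0,…,x_{i-1},x_{i+1},…,x_n) − (x_0*x_i, x_1*x_i, …, x_{i-1}*x_i, x_{i+1},…,x_n) ], with ∂_0 := 0. Then for every n ≥ 0, the image of ∂_{n+1} is contained in the kernel of ∂_n, and the quotient group ker(∂_n)/im(∂_{n+1}) — the n-th two-term (rack) homology group H_n^R(X) — is isomorphic to ℤ. -/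
namespace RackHomology

variable {X : Type*}

/-- Append `y` at the end. -/
noncomputable def J (n : ℕ) (y : X) : C X n →ₗ[ℤ] C X (n + 1) :=
  Finsupp.lmapDomain ℤ ℤ (fun x : Fin (n + 1) → X => (Fin.snoc x y : Fin (n + 2) → X))

/-- Act by `y` on the right on all coordinates. -/
noncomputable def R (op : X → X → X) (n : ℕ) (y : X) : C X n →ₗ[ℤ] C X n :=
  Finsupp.lmapDomain ℤ ℤ (fun x : Fin (n + 1) → X => fun j => op (x j) y)

/-- Augmentation. -/
noncomputable def aug (X : Type*) (n : ℕ) : C X n →ₗ[ℤ] ℤ :=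
  Finsupp.lift ℤ ℤ (Fin (n + 1) → X) fun _ => 1

theorem J_single (n : ℕ) (y : X) (x : Fin (n + 1) → X) (a : ℤ) :
    J n y (Finsupp.single x a) = Finsupp.single (Fin.snoc x y : Fin (n + 2) → X) a := by
  simp [J]

theorem R_single (op : X → X → X) (n : ℕ) (y : X) (x : Fin (n + 1) → X) (a : ℤ) :
    R op n y (Finsupp.single x a) = Finsupp.single (fun j => op (x j) y) a := by
  simp [R]

theorem aug_single (n : ℕ) (x : Fin (n + 1) → X) (a : ℤ) :
    aug X n (Finsupp.single x a) = a := by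
  simp [aug]

theorem bd_single (op : X → X → X) (n : ℕ) (x : Fin (n + 2) → X) :
    rackBoundary op n (Finsupp.single x 1) =
      ∑ i : Fin (n + 2), if i ≠ 0 then ((-1 : ℤ) ^ (i : ℕ)) •
        (Finsupp.single (dTriv i x) 1 - Finsupp.single (dOp op i x) 1) else 0 := by
  rw [← Finset.sum_filter]
  simp [rackBoundary]

theorem aug_bd (op : X → X → X) (n : ℕ) (z : C X (n + 1)) :
    aug X n (rackBoundary op n z) = 0 := by
  suffices h : aug X n ∘ₗ rackBoundary op n = 0 from LinearMap.congr_fun h z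
  refine Finsupp.lhom_ext' fun x => LinearMap.ext_ring ?_
  simp only [LinearMap.comp_apply, Finsupp.lsingle_apply, bd_single, map_sum, LinearMap.zero_apply]
  refine Finset.sum_eq_zero fun i _ => ?_
  split_ifs <;> simp [map_sub, aug_single]

theorem dTriv_last {n : ℕ} (x : Fin (n + 1) → X) (y : X) :
    dTriv (Fin.last (n + 1)) (Fin.snoc x y : Fin (n + 2) → X) = x := by
  funext j
  simp [dTriv]

theorem dOp_last (op : X → X → X) {n : ℕ} (x : Fin (n + 1) → X) (y : X) :
    dOp op (Fin.last (n + 1)) (Fin.snoc x y : Fin (n + 2) → X) = fun j => op (x j) y := by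
  funext j
  have := j.isLt
  simp [dOp]
  intro h
  omega

theorem dTriv_castSucc {n : ℕ} (i : Fin (n + 2)) (x : Fin (n + 2) → X) (y : X) :
    dTriv i.castSucc (Fin.snoc x y : Fin (n + 3) → X) = (Fin.snoc (dTriv i x) y : Fin (n + 2) → X) := by
  funext j
  refine Fin.lastCases ?_ (fun j => ?_) j
  · simp [dTriv]
  · simp [dTriv]

theorem dOp_castSucc (op : X → X → X) {n : ℕ} (i : Fin (n + 2)) (x : Fin (n + 2) → X) (y : X) :
    dOp op i.castSucc (Fin.snoc x y : Fin (n + 3) → X) =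
      (Fin.snoc (dOp op i x) y : Fin (n + 2) → X) := by
  funext j
  refine Fin.lastCases ?_ (fun j => ?_) j
  · have := i.isLt
    have h : ¬ (n + 1 < (i : ℕ)) := by omega
    simp [dOp, h]
  · simp [dOp]

theorem bd_J_zero (op : X → X → X) (y : X) (z : C X 0) :
    rackBoundary op 0 (J 0 y z) = - (z - R op 0 y z) := by
  suffices h : rackBoundary op 0 ∘ₗ J 0 y = - (LinearMap.id - R op 0 y) from LinearMap.congr_fun h z
  refine Finsupp.lhom_ext' fun x => LinearMap.ext_ring ?_
  have h1 := dTriv_last x y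
  have h2 := dOp_last op x y
  simp only [LinearMap.comp_apply, Finsupp.lsingle_apply, J_single, bd_single,
    Fin.sum_univ_castSucc (n := 1), LinearMap.neg_apply, LinearMap.sub_apply, R_single,
    LinearMap.id_apply, h1, h2]
  simp

theorem bd_J (op : X → X → X) (n : ℕ) (y : X) (z : C X (n + 1)) :
    rackBoundary op (n + 1) (J (n + 1) y z) =
      J n y (rackBoundary op n z) + ((-1 : ℤ) ^ n) • (z - R op (n + 1) y z) := by
  suffices h : rackBoundary op (n + 1) ∘ₗ J (n + 1) y =
      J n y ∘ₗ rackBoundary op n + ((-1 : ℤ) ^ n) • (LinearMap.id - R op (n + 1) y) from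
    LinearMap.congr_fun h z
  refine Finsupp.lhom_ext' fun x => LinearMap.ext_ring ?_
  simp only [LinearMap.comp_apply, Finsupp.lsingle_apply, J_single, bd_single,
    Fin.sum_univ_castSucc (n := n + 2), LinearMap.add_apply, LinearMap.smul_apply,
    LinearMap.sub_apply, R_single, LinearMap.id_apply, dTriv_last, dOp_last, map_sum,
    dTriv_castSucc, dOp_castSucc]
  congr 1
  · refine Finset.sum_congr rfl fun i _ => ?_
    by_cases h : i = 0
    · simp [h]
    · have h' : i.castSucc ≠ 0 := fun e => h (Fin.ext (congrArg Fin.val e :))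
      rw [if_pos h, if_pos h', map_smul, map_sub, J_single, J_single, Fin.val_castSucc]
  · rw [if_pos (by simp [Fin.ext_iff]), Fin.val_last, pow_add]
    simp

theorem bd_R (op : X → X → X)
    (sd : ∀ a b c : X, op (op a b) c = op (op a c) (op b c)) (n : ℕ) (y : X) (z : C X (n + 1)) :
    rackBoundary op n (R op (n + 1) y z) = R op n y (rackBoundary op n z) := by
  suffices h : rackBoundary op n ∘ₗ R op (n + 1) y = R op n y ∘ₗ rackBoundary op n from
    LinearMap.congr_fun h z
  refine Finsupp.lhom_ext' fun x => LinearMap.ext_ring ?_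
  simp only [LinearMap.comp_apply, Finsupp.lsingle_apply, R_single, bd_single, map_sum]
  refine Finset.sum_congr rfl fun i _ => ?_
  split_ifs with h
  · rw [map_smul, map_sub, R_single, R_single]
    congr 4
    funext j
    simp only [dOp]
    split_ifs
    · exact (sd _ _ _).symm
    · rfl
  · simp

theorem bd_bd (op : X → X → X)
    (sd : ∀ a b c : X, op (op a b) c = op (op a c) (op b c)) (n : ℕ) (z : C X (n + 2)) :
    rackBoundary op n (rackBoundary op (n + 1) z) = 0 := by
  induction n with
  | zero =>
    suffices h : rackBoundary op 0 ∘ₗ rackBoundary op 1 = 0 from LinearMap.congr_fun h z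
    refine Finsupp.lhom_ext' fun x => LinearMap.ext_ring ?_
    simp only [LinearMap.comp_apply, Finsupp.lsingle_apply, LinearMap.zero_apply]
    rw [← Fin.snoc_init_self x, ← J_single, bd_J, map_add, bd_J_zero, map_smul, map_sub, bd_R _ sd]
    simp
  | succ n ih =>
    suffices h : rackBoundary op (n + 1) ∘ₗ rackBoundary op (n + 2) = 0 from
      LinearMap.congr_fun h z
    refine Finsupp.lhom_ext' fun x => LinearMap.ext_ring ?_
    simp only [LinearMap.comp_apply, Finsupp.lsingle_apply, LinearMap.zero_apply]
    rw [← Fin.snoc_init_self x, ← J_single, bd_J, map_add, bd_J, map_smul, map_sub, bd_R _ sd, ih]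
    simp [pow_succ]

theorem R_fixed (op : X → X → X) (r c : X) (hr : ∀ x : X, op x r = c) (n : ℕ) (z : C X n) :
    R op n r z = aug X n z • Finsupp.single (fun _ => c) 1 := by
  suffices h : R op n r = (aug X n).smulRight (Finsupp.single (fun _ => c) 1) from
    LinearMap.congr_fun h z
  refine Finsupp.lhom_ext' fun x => LinearMap.ext_ring ?_
  simp [R_single, aug_single, hr]

theorem bd_const (op : X → X → X) (c : X) (hc : op c c = c) (n : ℕ) :
    rackBoundary op n (Finsupp.single (fun _ => c) 1) = 0 := by
  rw [bd_single]
  refine Finset.sum_eq_zero fun i _ => ?_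
  have : dOp op i (fun _ => c) = dTriv i (fun _ => c) := by
    funext j
    simp [dOp, dTriv, hc]
  simp [this]

/-- If a shelf `(X,*)` has a right fixed element (`x*r = c` for all
`x`), then its two-term (rack) homology is `ℤ` in every dimension: `im ∂_{n+1} ⊆
ker ∂_n` for all `n`, `H_0 = C_0 / im ∂_1 ≅ ℤ` (since `∂_0 = 0`), and for `n ≥ 1`,
`H_n = ker ∂_n / im ∂_{n+1} ≅ ℤ`. -/
theorem rack_homology_of_right_fixed (op : X → X → X)
    (sd : ∀ a b c : X, op (op a b) c = op (op a c) (op b c))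
    (r c : X) (hr : ∀ x : X, op x r = c) :
    Nonempty ((C X 0 ⧸ LinearMap.range (rackBoundary op 0)) ≃ₗ[ℤ] ℤ) ∧
    (∀ n : ℕ,
      LinearMap.range (rackBoundary op (n + 1)) ≤ LinearMap.ker (rackBoundary op n) ∧
      Nonempty
        ((LinearMap.ker (rackBoundary op n) ⧸
            Submodule.comap (LinearMap.ker (rackBoundary op n)).subtype
              (LinearMap.range (rackBoundary op (n + 1)))) ≃ₗ[ℤ] ℤ)) := by
  have hc : op c c = c := by
    have := sd r r r
    rw [hr, hr] at this
    exact this.symm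
  refine ⟨?_, fun n => ⟨?_, ?_⟩⟩
  · have hs : Function.Surjective (aug X 0) := fun a => ⟨Finsupp.single (fun _ => c) a, aug_single _ _ _⟩
    have hk : LinearMap.range (rackBoundary op 0) = LinearMap.ker (aug X 0) := by
      ext z
      constructor
      · rintro ⟨w, rfl⟩
        exact aug_bd op 0 w
      · intro hz
        have hz' : aug X 0 z = 0 := hz
        refine ⟨- J 0 r z, ?_⟩
        rw [map_neg, bd_J_zero, R_fixed op r c hr, hz']
        simp
    rw [hk]
    exact ⟨(aug X 0).quotKerEquivOfSurjective hs⟩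
  · rintro _ ⟨w, rfl⟩
    exact bd_bd op sd n w
  · let f := (aug X (n + 1)).comp (LinearMap.ker (rackBoundary op n)).subtype
    have hs : Function.Surjective f := fun a => by
      refine ⟨a • ⟨Finsupp.single (fun _ => c) 1, bd_const op c hc n⟩, ?_⟩
      simp [f, aug_single]
    have hk : Submodule.comap (LinearMap.ker (rackBoundary op n)).subtype
        (LinearMap.range (rackBoundary op (n + 1))) = LinearMap.ker f := by
      ext ⟨z, hz⟩
      have hz0 : rackBoundary op n z = 0 := hz
      constructor
      · rintro ⟨w, hw⟩
        have hw' : rackBoundary op (n + 1) w = z := hw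
        change aug X (n + 1) z = 0
        rw [← hw']
        exact aug_bd op (n + 1) w
      · intro h
        have hz' : aug X (n + 1) z = 0 := h
        refine ⟨((-1 : ℤ) ^ n) • J (n + 1) r z, ?_⟩
        change rackBoundary op (n + 1) _ = z
        rw [map_smul, bd_J, R_fixed op r c hr, hz', hz0, map_zero, zero_add, zero_smul, sub_zero,
          smul_smul, ← mul_pow]
        simp
    rw [hk]
    exact ⟨f.quotKerEquivOfSurjective hs⟩

end RackHomology
end

section
/- Let (X,*) be a unital shelf with unit 1. For n ≥ 0 let C_n be the free abelian group on X^{n+1}, and let the one-term boundary ∂_n : C_n → C_{n-1} (n ≥ 1) be the ℤ-linear map sending a generator (x_0,…,x_n) to Σ_{i=0}^n (−1)^i d_i(x_0,…,x_n), where d_0(x_0,…,x_n) = (x_1,…,x_n) and, for 1 ≤ i ≤ n, d_i(x_0,…,x_n) = (x_0*x_i, x_1*x_i, …, x_{i-1}*x_i, x_{i+1},…,x_n). Then for every n ≥ 1, ker(∂_n) = im(∂_{n+1}); i.e., unital shelves have trivial one-term homology in all positive dimensions. -/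
namespace OneTermHomology

variable {X : Type*}

/-- The chain module `C_n`: the free abelian group (as a `ℤ`-module) on the set of
`(n+1)`-tuples of elements of `X`. -/
abbrev C (X : Type*) (n : ℕ) : Type _ := (Fin (n + 1) → X) →₀ ℤ

/-- The `i`-th one-term face map for the operation `op`: delete the `i`-th
coordinate and act by `x_i` on the right on all earlier coordinates.  For `i = 0`
this is `(x_0, …, x_n) ↦ (x_1, …, x_n)`, and for `i ≥ 1` it is
`(x_0, …, x_n) ↦ (x_0*x_i, …, x_{i-1}*x_i, x_{i+1}, …, x_n)`. -/
def dOp (op : X → X → X) {n : ℕ} (i : Fin (n + 2)) (x : Fin (n + 2) → X) :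
    Fin (n + 1) → X :=
  fun j => if (j : ℕ) < (i : ℕ) then op (x (Fin.castSucc j)) (x i) else x (i.succAbove j)

/-- The one-term boundary map `∂_{n+1} : C_{n+1} → C_n`, sending a generator
`(x_0, …, x_{n+1})` to `Σ_{i=0}^{n+1} (−1)^i d_i(x_0, …, x_{n+1})`. -/
noncomputable def oneBoundary (op : X → X → X) (n : ℕ) :
    C X (n + 1) →ₗ[ℤ] C X n :=
  Finsupp.lift (C X n) ℤ (Fin (n + 2) → X) fun x =>
    ∑ i : Fin (n + 2), ((-1 : ℤ) ^ (i : ℕ)) • Finsupp.single (dOp op i x) 1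

theorem dOp_comm (op : X → X → X)
    (sd : ∀ a b c : X, op (op a b) c = op (op a c) (op b c)) (n : ℕ)
    (x : Fin (n + 3) → X) (i j : Fin (n + 2)) (h : i ≤ j) :
    dOp op i (dOp op j.succ x) = dOp op j (dOp op i.castSucc x) := by
  obtain ⟨i, hi⟩ := i
  obtain ⟨j, hj⟩ := j
  have h' : i ≤ j := h
  funext ⟨k, hk⟩
  simp only [dOp, Fin.succAbove, Fin.lt_def, Fin.val_castSucc, Fin.val_succ, Fin.castSucc_mk,
    Fin.succ_mk]
  have hi' : i < j + 1 := by omega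
  have hj' : ¬ j < i := by omega
  by_cases h1 : k < i
  · have h2 : k < j := by omega
    have h3 : k < j + 1 := by omega
    simp [h1, h2, h3, hi', hj']
    exact (sd _ _ _).symm
  · by_cases h2 : k < j
    · simp [h1, h2, hj']
    · have h3 : ¬ k + 1 < j + 1 := by omega
      have h4 : ¬ k + 1 < i := by omega
      simp [h1, h2, h4]

theorem oneBoundary_single (op : X → X → X) (n : ℕ) (x : Fin (n + 2) → X) :
    oneBoundary op n (Finsupp.single x 1) =
      ∑ i : Fin (n + 2), ((-1 : ℤ) ^ (i : ℕ)) • Finsupp.single (dOp op i x) 1 := by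
  simp [oneBoundary]

theorem boundary_sq (op : X → X → X)
    (sd : ∀ a b c : X, op (op a b) c = op (op a c) (op b c)) (n : ℕ)
    (x : Fin (n + 3) → X) :
    oneBoundary op n (oneBoundary op (n + 1) (Finsupp.single x 1)) = 0 := by
  rw [oneBoundary_single, map_sum]
  simp only [map_smul, oneBoundary_single, Finset.smul_sum]
  rw [← Finset.sum_product']
  rw [← Finset.sum_filter_add_sum_filter_not _ (fun p : Fin (n + 3) × Fin (n + 2) =>
    (p.2 : ℕ) < p.1), ← eq_neg_iff_add_eq_zero, ← Finset.sum_neg_distrib]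
  refine Finset.sum_bij' (fun p hp => (p.2.castSucc, p.1.pred (by
      simp only [Finset.mem_filter] at hp
      intro h0
      have := hp.2
      rw [h0] at this
      simp at this)))
    (fun p hp => (p.2.succ, ⟨(p.1 : ℕ), by
      simp only [Finset.mem_filter] at hp
      have := hp.2
      omega⟩)) ?_ ?_ ?_ ?_ ?_
  · rintro ⟨a, b⟩ hp
    simp at hp ⊢
    omega
  · rintro ⟨a, b⟩ hp
    simp at hp ⊢
    omega
  · rintro ⟨a, b⟩ hp
    simp
  · rintro ⟨a, b⟩ hp
    simp [Fin.ext_iff]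
  · rintro ⟨a, b⟩ hp
    simp only [Finset.mem_filter] at hp
    have hlt := hp.2
    obtain ⟨c, rfl⟩ : ∃ c : Fin (n + 2), a = c.succ :=
      ⟨a.pred (by intro h0; rw [h0] at hlt; simp at hlt), by simp⟩
    have hle : b ≤ c := by
      simp only [Fin.val_succ] at hlt
      exact Fin.le_def.2 (by omega)
    simp only [Fin.pred_succ, dOp_comm op sd n x b c hle, smul_smul, ← neg_smul,
      Fin.val_succ, Fin.val_castSucc]
    congr 1
    ring

/-- Append `e` at the end of each tuple. -/
noncomputable def app (e : X) (n : ℕ) : C X n →ₗ[ℤ] C X (n + 1) :=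
  Finsupp.lmapDomain ℤ ℤ (fun x : Fin (n + 1) → X => (Fin.snoc x e : Fin (n + 2) → X))

theorem app_single (e : X) (n : ℕ) (x : Fin (n + 1) → X) :
    app e n (Finsupp.single x 1) = Finsupp.single (Fin.snoc x e : Fin (n + 2) → X) 1 := by
  simp [app]

theorem dOp_snoc_last (op : X → X → X) (e : X) (he₂ : ∀ x : X, op x e = x) (n : ℕ)
    (x : Fin (n + 1) → X) :
    dOp op (Fin.last (n + 1)) (Fin.snoc x e : Fin (n + 2) → X) = x := by
  funext k
  simp [dOp, he₂]

theorem dOp_snoc (op : X → X → X) (e : X) (n : ℕ)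
    (x : Fin (n + 2) → X) (i : Fin (n + 2)) :
    dOp op i.castSucc (Fin.snoc x e : Fin (n + 3) → X) =
      (Fin.snoc (dOp op i x) e : Fin (n + 2) → X) := by
  funext k
  refine Fin.lastCases ?_ (fun k => ?_) k
  · have h : ¬ (n + 1 < (i : ℕ)) := by omega
    have h2 : i.castSucc.succAbove (Fin.last (n + 1)) = Fin.last (n + 2) := by
      rw [Fin.succAbove_of_le_castSucc _ _ (by rw [Fin.le_def]; simp; omega)]
      simp
    simp [dOp, h, h2]
  · simp only [dOp, Fin.snoc_castSucc, Fin.val_castSucc, Fin.castSucc_succAbove_castSucc]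

theorem boundary_app (op : X → X → X) (e : X) (he₂ : ∀ x : X, op x e = x) (n : ℕ)
    (c : C X (n + 1)) :
    oneBoundary op (n + 1) (app e (n + 1) c) =
      app e n (oneBoundary op n c) + ((-1 : ℤ) ^ (n + 2)) • c := by
  have : (oneBoundary op (n + 1)) ∘ₗ (app e (n + 1)) =
      (app e n) ∘ₗ (oneBoundary op n) + ((-1 : ℤ) ^ (n + 2)) • LinearMap.id := by
    refine Finsupp.lhom_ext' fun x => LinearMap.ext_ring ?_
    simp only [LinearMap.comp_apply, LinearMap.add_apply, LinearMap.smul_apply,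
      LinearMap.id_apply, Finsupp.lsingle_apply]
    rw [app_single, oneBoundary_single, oneBoundary_single, Fin.sum_univ_castSucc,
      dOp_snoc_last op e he₂, map_sum]
    simp only [map_smul, app_single, dOp_snoc, Fin.val_castSucc, Fin.val_last]
  exact LinearMap.congr_fun this c

/-- A unital shelf has trivial one-term homology in all positive
dimensions: for every `n ≥ 1`, `ker ∂_n = im ∂_{n+1}`. -/
theorem unital_shelf_one_term_homology_trivial (op : X → X → X)
    (sd : ∀ a b c : X, op (op a b) c = op (op a c) (op b c))
    (e : X) (he₁ : ∀ x : X, op e x = x) (he₂ : ∀ x : X, op x e = x) :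
    ∀ n : ℕ, LinearMap.ker (oneBoundary op n) = LinearMap.range (oneBoundary op (n + 1)) := by
  intro n
  apply le_antisymm
  · intro c hc
    rw [LinearMap.mem_ker] at hc
    refine ⟨((-1 : ℤ) ^ (n + 2)) • app e (n + 1) c, ?_⟩
    rw [map_smul, boundary_app op e he₂, hc, map_zero, zero_add, smul_smul, ← mul_pow]
    simp
  · rintro _ ⟨c, rfl⟩
    rw [LinearMap.mem_ker]
    have : (oneBoundary op n) ∘ₗ (oneBoundary op (n + 1)) = 0 := by
      refine Finsupp.lhom_ext' fun x => LinearMap.ext_ring ?_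
      exact boundary_sq op sd n x
    exact LinearMap.congr_fun this c

end OneTermHomology
end

section
/- Every finite nonempty proto-unital shelf has at least one right zero: if (X,*) is a finite nonempty shelf satisfying a*b = b*(a*b) and a*b = (a*b)*b for all a,b ∈ X, then there exists r ∈ X with x*r = r for all x ∈ X. -/
/-- Every finite nonempty proto-unital shelf has a right zero. -/
theorem finite_proto_unital_shelf_has_right_zero {X : Type*} [Finite X] [Nonempty X]
    (op : X → X → X)
    (sd : ∀ a b c : X, op (op a b) c = op (op a c) (op b c))
    (h₁ : ∀ a b : X, op a b = op b (op a b))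
    (h₂ : ∀ a b : X, op a b = op (op a b) b) :
    ∃ r : X, ∀ x : X, op x r = r := by
  classical
  -- a proto-unital shelf is associative
  have assoc : ∀ a b c : X, op (op a b) c = op a (op b c) := by
    intro a b c
    rw [sd a b c, sd a c (op b c), ← h₁ b c, ← h₂]
  have key : ∀ S : Finset X, ∃ r : X, ∀ x ∈ S, op x r = r := by
    intro S
    induction S using Finset.induction_on with
    | empty => exact ⟨Classical.arbitrary X, by simp⟩
    | insert y S _ ih =>
      obtain ⟨r, hr⟩ := ih
      refine ⟨op r y, fun x hx => ?_⟩
      rcases Finset.mem_insert.mp hx with rfl | hx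
      · exact (h₁ r x).symm
      · rw [← assoc, hr x hx]
  haveI := Fintype.ofFinite X
  obtain ⟨r, hr⟩ := key Finset.univ
  exact ⟨r, fun x => hr x (Finset.mem_univ x)⟩
end
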